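/- arXiv:2008.09529 — 10 statements merged into one kernel-verified Lean document; each statement's English description precedes it below -/
import Mathlib

section
/- Let N be a positive integer, f : Fin N → ℝ with f i > 0 for all i and ∑ i, f i = 1, and let A : Fin N → Fin N → ℝ satisfy A i j ≥ 0 for all i, j, ∑ i, f i * A i j = f j for every j, and ∑ j, A i j = 1 for every i. Let q : Fin N → ℝ be monotone nondecreasing (i ≤ j → q i ≤ q j), and set q̄ i = ∑ j, A i j * q j. Then q F-majorizes q̄: for every k, ∑_{j ≤ k} f j * q̄ j ≥ ∑_{j ≤ k} f j * q j, and ∑ j, f j * q̄ j = ∑ j, f j * q j. -/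
open Finset

/-!
The partial sum of `f j * q̄ j` over `j ≤ k` equals `∑ j, w j * q j`, where `w` is the measure
obtained by sending the mass of `f` on `{j ≤ k}` through `A`. Since `A` preserves `f`, this measure
lies between `0` and `f`, and it has the same total mass as `f` on `{j ≤ k}`. Among all such
measures, `f` restricted to `{j ≤ k}` uses the mass where `q` is smallest, so it minimizes the
sum (the bathtub principle).
-/

section Bathtub

variable {ι R : Type*} [Fintype ι] [Ring R] [PartialOrder R] [IsOrderedRing R]

theorem sum_mul_le_sum_mul_of_threshold {s : Finset ι} {g w q : ι → R} {c : R}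
    (hwg : ∀ j ∈ s, w j ≤ g j) (hw : ∀ j ∉ s, 0 ≤ w j) (hsum : ∑ j, w j = ∑ j ∈ s, g j)
    (hqc : ∀ j ∈ s, q j ≤ c) (hcq : ∀ j ∉ s, c ≤ q j) :
    ∑ j ∈ s, g j * q j ≤ ∑ j, w j * q j := by
  classical
  have moved_mass : ∑ j ∈ s, (g j - w j) = ∑ j ∈ sᶜ, w j := by
    rw [sum_sub_distrib, ← hsum, ← sum_add_sum_compl s w, add_sub_cancel_left]
  have moved_sum : ∑ j ∈ s, (g j - w j) * q j ≤ ∑ j ∈ sᶜ, w j * q j := calc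
    ∑ j ∈ s, (g j - w j) * q j ≤ ∑ j ∈ s, (g j - w j) * c :=
      sum_le_sum fun j hj ↦ mul_le_mul_of_nonneg_left (hqc j hj) (sub_nonneg.2 (hwg j hj))
    _ = ∑ j ∈ sᶜ, w j * c := by rw [← sum_mul, moved_mass, sum_mul]
    _ ≤ ∑ j ∈ sᶜ, w j * q j := sum_le_sum fun j hj ↦
      have hj : j ∉ s := mem_compl.1 hj
      mul_le_mul_of_nonneg_left (hcq j hj) (hw j hj)
  calc
    ∑ j ∈ s, g j * q j = ∑ j ∈ s, w j * q j + ∑ j ∈ s, (g j - w j) * q j := by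
      simp only [sub_mul, sum_sub_distrib, add_sub_cancel]
    _ ≤ ∑ j ∈ s, w j * q j + ∑ j ∈ sᶜ, w j * q j := by gcongr
    _ = ∑ j, w j * q j := sum_add_sum_compl s _

end Bathtub

section Transport

open Matrix

variable {m n R : Type*} [Fintype m]

theorem vecMul_le_vecMul_of_nonneg [Semiring R] [PartialOrder R] [IsOrderedRing R]
    {A : Matrix m n R} {u f : m → R} (huf : u ≤ f) (hA : ∀ i j, 0 ≤ A i j) :
    u ᵥ* A ≤ f ᵥ* A :=
  fun j ↦ dotProduct_le_dotProduct_of_nonneg_right huf fun i ↦ hA i j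

theorem sum_vecMul_mul_le_dotProduct_mulVec [Fintype n] [Ring R] [PartialOrder R]
    [IsOrderedRing R] {A : Matrix m n R} (hA : ∀ i j, 0 ≤ A i j) (hA_one : A *ᵥ 1 = 1) {u f : m → R}
    (hu : 0 ≤ u) (huf : u ≤ f) {s : Finset n} (hsum : ∑ i, u i = ∑ j ∈ s, (f ᵥ* A) j)
    {q : n → R} {c : R} (hqc : ∀ j ∈ s, q j ≤ c) (hcq : ∀ j ∉ s, c ≤ q j) :
    ∑ j ∈ s, (f ᵥ* A) j * q j ≤ u ⬝ᵥ A *ᵥ q := by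
  have vecMul_nonneg : 0 ≤ u ᵥ* A := by
    simpa only [zero_vecMul] using vecMul_le_vecMul_of_nonneg hu hA
  have mass_preserved : ∑ j, (u ᵥ* A) j = ∑ i, u i := by
    rw [← dotProduct_one, ← dotProduct_mulVec, hA_one, dotProduct_one]
  rw [dotProduct_mulVec]
  exact sum_mul_le_sum_mul_of_threshold (fun j _ ↦ vecMul_le_vecMul_of_nonneg huf hA j)
    (fun j _ ↦ vecMul_nonneg j) (mass_preserved.trans hsum) hqc hcq

theorem sum_mul_le_sum_mul_mulVec_of_vecMul_eq_self [Ring R] [PartialOrder R] [IsOrderedRing R]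
    {A : Matrix m m R} (hA : ∀ i j, 0 ≤ A i j) (hA_one : A *ᵥ 1 = 1) {f : m → R} (hf : 0 ≤ f)
    (hfA : f ᵥ* A = f) {s : Finset m} {q : m → R} {c : R}
    (hqc : ∀ j ∈ s, q j ≤ c) (hcq : ∀ j ∉ s, c ≤ q j) :
    ∑ j ∈ s, f j * q j ≤ ∑ j ∈ s, f j * (A *ᵥ q) j := by
  let u : m → R := (s : Set m).indicator f
  have u_nonneg : 0 ≤ u := Set.indicator_nonneg fun i _ ↦ hf i
  have u_le : u ≤ f := Set.indicator_le_self' fun i _ ↦ hf i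
  have u_mass : ∑ i, u i = ∑ j ∈ s, (f ᵥ* A) j := by
    rw [hfA, sum_indicator_subset f (subset_univ s)]
  calc
    ∑ j ∈ s, f j * q j = ∑ j ∈ s, (f ᵥ* A) j * q j := by rw [hfA]
    _ ≤ u ⬝ᵥ A *ᵥ q :=
      sum_vecMul_mul_le_dotProduct_mulVec hA hA_one u_nonneg u_le u_mass hqc hcq
    _ = ∑ j ∈ s, f j * (A *ᵥ q) j := by
      simp only [u, dotProduct, ← Set.indicator_mul_left]
      exact sum_indicator_subset _ (subset_univ s)

end Transport

section Majorization

variable {ι R : Type*} [Fintype ι]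

/-- `FMajorizes f q q'` says that `q` F-majorizes `q'` with respect to the weights `f`: the
initial weighted sums of `q` lie *below* those of `q'`, as for increasingly ordered vectors in
classical majorization, with equal totals. Positivity and normalization of `f` are not part of
the notion. -/
def FMajorizes [LE ι] [DecidableLE ι] [NonUnitalNonAssocSemiring R] [LE R] (f q q' : ι → R) :
    Prop :=
  (∀ k, ∑ j with j ≤ k, f j * q j ≤ ∑ j with j ≤ k, f j * q' j) ∧
    ∑ j, f j * q' j = ∑ j, f j * q j

open Matrix

theorem signaled_qualities_majorized_general [LinearOrder ι] [Ring R] [PartialOrder R]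
    [IsOrderedRing R] {f : ι → R} (hf : 0 ≤ f) {A : Matrix ι ι R} (hA : A ∈ rowStochastic R ι)
    (hfA : f ᵥ* A = f) {q : ι → R} (hq : Monotone q) : FMajorizes f q (A *ᵥ q) := by
  obtain ⟨hA_nonneg, hA_one⟩ := mem_rowStochastic.1 hA
  refine ⟨fun k ↦ ?_, ?_⟩
  · refine sum_mul_le_sum_mul_mulVec_of_vecMul_eq_self hA_nonneg hA_one hf hfA (c := q k)
      (fun j hj ↦ hq ?_) (fun j hj ↦ hq ?_)
    · simpa using hj
    · exact le_of_not_ge (by simpa using hj)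
  · calc
      f ⬝ᵥ A *ᵥ q = f ᵥ* A ⬝ᵥ q := dotProduct_mulVec f A q
      _ = f ⬝ᵥ q := by rw [hfA]

end Majorization

/-- If `A` is a nonnegative matrix with `fᵀA = fᵀ` and `A·e = e`,
and `q` is nondecreasing, then `q̄ = A·q` is F-majorized by `q`: all partial
f-weighted sums of `q̄` dominate those of `q`, with equal totals. -/
theorem signaled_qualities_majorized
    (N : ℕ) (hN : 0 < N)
    (f : Fin N → ℝ) (hf : ∀ i, 0 < f i) (hfsum : ∑ i, f i = 1)
    (A : Fin N → Fin N → ℝ)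
    (hApos : ∀ i j, 0 ≤ A i j)
    (hAf : ∀ j, ∑ i, f i * A i j = f j)
    (hAe : ∀ i, ∑ j, A i j = 1)
    (q : Fin N → ℝ) (hq : ∀ i j : Fin N, i ≤ j → q i ≤ q j)
    (qbar : Fin N → ℝ) (hqbar : ∀ i, qbar i = ∑ j, A i j * q j) :
    (∀ k : Fin N,
      ∑ j ∈ Finset.filter (fun j => j ≤ k) Finset.univ, f j * qbar j ≥
      ∑ j ∈ Finset.filter (fun j => j ≤ k) Finset.univ, f j * q j) ∧
    (∑ j, f j * qbar j = ∑ j, f j * q j) := by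
  obtain rfl : qbar = Matrix.mulVec (Matrix.of A) q := funext hqbar
  exact signaled_qualities_majorized_general (fun i ↦ (hf i).le)
    (Matrix.mem_rowStochastic_iff_sum.2 ⟨hApos, hAe⟩) (funext hAf) hq
end

section
/- Let N be a positive integer, f : Fin N → ℝ with f i > 0 for all i and ∑ i, f i = 1. Let q, q̄ : Fin N → ℝ both be monotone nondecreasing, and suppose that for all i, j, q i = q j implies q̄ i = q̄ j. If q F-majorizes q̄, then there exists a finite Bayes-plausible posterior system (K, w, μ) for f such that for every i, q̄ i = (f i)⁻¹ * ∑ s, w s * μ s i * (∑ j, μ s j * q j); that is, q̄ is the vector of signaled qualities induced from q by some rating system. -/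
open Finset

/-!
The vectors obtained by pooling the states along the cells of a partition are implementable, and
mixing rating systems mixes the signaled qualities, so it suffices to put `q̄` in the convex hull of
these finitely many vectors. By Hahn-Banach this means: for every `c` there is a partition whose
pooled vector `p` satisfies `⟨c, p⟩ ≤ ⟨c, q̄⟩`, in the inner product weighted by `f`. Let `z` be the
projection of `c` onto the cone of nonincreasing functions, and pool along the level sets of `z`.
Then `⟨c, p⟩ = ⟨z, q⟩` because `z` averages `c` over its own level sets, `⟨z, q⟩ ≤ ⟨z, q̄⟩` by
F-majorization, and `⟨z, q̄⟩ ≤ ⟨c, q̄⟩` because `-q̄` lies in the cone.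
-/

section LinearAlgebra

variable {ι : Type*} [Fintype ι]

theorem mem_convexHull_of_forall_exists_sum_mul_le {s : Set (ι → ℝ)} (hs : s.Finite) {x : ι → ℝ}
    (h : ∀ c : ι → ℝ, ∃ y ∈ s, ∑ i, c i * y i ≤ ∑ i, c i * x i) : x ∈ convexHull ℝ s := by
  classical
  by_contra hx
  obtain ⟨φ, u, hφx, hφs⟩ := geometric_hahn_banach_point_closed (convex_convexHull ℝ s)
    (hs.isCompact_convexHull ℝ).isClosed hx
  have hφ (y : ι → ℝ) : φ y = ∑ i, φ (Pi.single i 1) * y i := by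
    rw [← φ.coe_coe, LinearMap.pi_apply_eq_sum_univ (φ : (ι → ℝ) →ₗ[ℝ] ℝ) y]
    refine Finset.sum_congr rfl fun i _ => ?_
    rw [smul_eq_mul, mul_comm]
    congr 2
    ext j
    simp only [Pi.single_apply, eq_comm]
  obtain ⟨y, hys, hyx⟩ := h fun i => φ (Pi.single i 1)
  rw [← hφ, ← hφ] at hyx
  exact (hφx.trans (hφs y (subset_convexHull ℝ s hys))).not_ge hyx

theorem exists_weighted_projection {f : ι → ℝ} (hf : ∀ i, 0 < f i) {K : Set (ι → ℝ)}
    (hne : K.Nonempty) (hclosed : IsClosed K) (hconvex : Convex ℝ K) (c : ι → ℝ) :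
    ∃ z ∈ K, ∀ y ∈ K, ∑ i, f i * (c i - z i) * (y i - z i) ≤ 0 := by
  -- The substitution `y ↦ √f * y` reduces to the Euclidean projection.
  let scale (y : ι → ℝ) : EuclideanSpace ℝ ι := WithLp.toLp 2 fun i => √(f i) * y i
  let unscale : EuclideanSpace ℝ ι →ₗ[ℝ] ι → ℝ :=
    { toFun := fun v i => v i / √(f i)
      map_add' := fun v w => by ext i; simp [add_div]
      map_smul' := fun a v => by ext i; simp [mul_div_assoc] }
  have hsqrt (i : ι) : √(f i) ≠ 0 := (Real.sqrt_pos.2 (hf i)).ne'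
  have unscale_scale (y : ι → ℝ) : unscale (scale y) = y :=
    funext fun i => mul_div_cancel_left₀ (y i) (hsqrt i)
  have hconvex' : Convex ℝ (unscale ⁻¹' K) := hconvex.linear_preimage unscale
  have hclosed' : IsClosed (unscale ⁻¹' K) :=
    hclosed.preimage unscale.continuous_of_finiteDimensional
  obtain ⟨y₀, hy₀⟩ := hne
  obtain ⟨v, hvK, hv⟩ := exists_norm_eq_iInf_of_complete_convex
    ⟨scale y₀, by rwa [Set.mem_preimage, unscale_scale]⟩ hclosed'.isComplete hconvex' (scale c)
  refine ⟨unscale v, hvK, fun y hy => ?_⟩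
  have hinner := (norm_eq_iInf_iff_real_inner_le_zero hconvex' hvK).1 hv (scale y)
    (by rwa [Set.mem_preimage, unscale_scale])
  rw [PiLp.inner_apply] at hinner
  refine (Finset.sum_congr rfl fun i _ => ?_).trans_le hinner
  have hsq : √(f i) * √(f i) = f i := Real.mul_self_sqrt (hf i).le
  have hvi : v i = √(f i) * unscale v i := (mul_div_cancel₀ (v i) (hsqrt i)).symm
  simp only [PiLp.sub_apply, RCLike.inner_apply, conj_trivial, hvi, scale]
  linear_combination -(c i - unscale v i) * (y i - unscale v i) * hsq

end LinearAlgebra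

section AntitoneRegression

variable {ι : Type*} [Preorder ι]

open Filter Topology in
theorem eventually_antitone_add_smul [Finite ι] {z h : ι → ℝ} (hz : Antitone z)
    (hh : ∀ i j, z i = z j → h i = h j) : ∀ᶠ t : ℝ in 𝓝 0, Antitone (z + t • h) := by
  simp only [Antitone, eventually_all]
  intro i j hij
  rcases (hz hij).eq_or_lt with heq | hlt
  · exact Eventually.of_forall fun t => by simp [heq, hh j i heq]
  · have hcont (k : ι) : Tendsto (fun t : ℝ => (z + t • h) k) (𝓝 0) (𝓝 (z k)) := by
      have : Continuous fun t : ℝ => z k + t * h k := by fun_prop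
      simpa using this.tendsto 0
    exact ((hcont j).eventually_lt (hcont i) hlt).mono fun t ht => ht.le

theorem convex_setOf_antitone : Convex ℝ {z : ι → ℝ | Antitone z} :=
  fun _ hx _ hy _ _ ha hb _ _ _ hij =>
    add_le_add (mul_le_mul_of_nonneg_left (hx hij) ha) (mul_le_mul_of_nonneg_left (hy hij) hb)

open Filter Topology in
theorem exists_antitone_regression [Fintype ι] {f : ι → ℝ} (hf : ∀ i, 0 < f i) (c : ι → ℝ) :
    ∃ z : ι → ℝ, Antitone z ∧
      (∀ x, Monotone x → ∑ i, f i * z i * x i ≤ ∑ i, f i * c i * x i) ∧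
      ∀ h : ι → ℝ, (∀ i j, z i = z j → h i = h j) →
        ∑ i, f i * c i * h i = ∑ i, f i * z i * h i := by
  obtain ⟨z, hz, hproj⟩ := exists_weighted_projection hf ⟨0, antitone_const⟩
    isClosed_antitone convex_setOf_antitone c
  have hvar (t : ℝ) (h : ι → ℝ) (ht : Antitone (z + t • h)) :
      t * (∑ i, f i * c i * h i - ∑ i, f i * z i * h i) ≤ 0 := by
    refine le_of_eq_of_le ?_ (hproj _ ht)
    rw [← Finset.sum_sub_distrib, Finset.mul_sum]
    refine Finset.sum_congr rfl fun i _ => ?_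
    simp only [Pi.add_apply, Pi.smul_apply, smul_eq_mul]
    ring
  refine ⟨z, hz, fun x hx => ?_, fun h hh => ?_⟩
  · have := hvar (-1) x (by rw [neg_one_smul]; exact hz.add hx.neg)
    linarith
  · have hev : ∀ᶠ t : ℝ in 𝓝 0, t * (∑ i, f i * c i * h i - ∑ i, f i * z i * h i) ≤ 0 :=
      (eventually_antitone_add_smul hz hh).mono fun t => hvar t h
    obtain ⟨t, ht, htpos⟩ :=
      ((hev.filter_mono nhdsWithin_le_nhds).and (self_mem_nhdsWithin (s := Set.Ioi 0))).exists
    obtain ⟨u, hu, huneg⟩ :=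
      ((hev.filter_mono nhdsWithin_le_nhds).and (self_mem_nhdsWithin (s := Set.Iio 0))).exists
    exact le_antisymm (sub_nonpos.1 (nonpos_of_mul_nonpos_right ht htpos))
      (sub_nonneg.1 (nonneg_of_mul_nonpos_right hu huneg))

end AntitoneRegression

section Majorization

variable {ι : Type*} [LinearOrder ι]

theorem mul_sum_le_sum_mul_of_antitone {c d : ι → ℝ} (hc : Antitone c) (s : Finset ι)
    (hd : ∀ k ∈ s, 0 ≤ ∑ j ∈ s with j ≤ k, d j) {b : ℝ} (hb : ∀ j ∈ s, b ≤ c j) :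
    b * ∑ j ∈ s, d j ≤ ∑ j ∈ s, c j * d j := by
  induction s using Finset.induction_on_max generalizing b with
  | empty => simp
  | insert m s hlt ih =>
    have hm : m ∉ s := fun h => (hlt m h).false
    have hfilter {k : ι} (hk : k ∈ s) : {j ∈ insert m s | j ≤ k} = {j ∈ s | j ≤ k} := by
      rw [Finset.filter_insert, if_neg (hlt k hk).not_ge]
    have hprev : c m * ∑ j ∈ s, d j ≤ ∑ j ∈ s, c j * d j :=
      ih (fun k hk => hfilter hk ▸ hd k (Finset.mem_insert_of_mem hk))
        fun j hj => hc (hlt j hj).le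
    have htotal : 0 ≤ ∑ j ∈ insert m s, d j := by
      have hle : ∀ j ∈ insert m s, j ≤ m := by
        simpa using fun j hj => (hlt j hj).le
      simpa only [Finset.filter_true_of_mem hle] using hd m (Finset.mem_insert_self m s)
    calc b * ∑ j ∈ insert m s, d j
        ≤ c m * ∑ j ∈ insert m s, d j :=
          mul_le_mul_of_nonneg_right (hb m (Finset.mem_insert_self m s)) htotal
      _ = c m * d m + c m * ∑ j ∈ s, d j := by rw [Finset.sum_insert hm, mul_add]
      _ ≤ c m * d m + ∑ j ∈ s, c j * d j := by gcongr
      _ = ∑ j ∈ insert m s, c j * d j := by rw [Finset.sum_insert hm]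

/-- `q` F-majorizes `qbar`, where the weights `f` are the increments of the distribution `F`: the
vectors have the same mean, and the `f`-weighted partial sums of `qbar` dominate those of `q`. -/
structure FMajorizes_s2 [Fintype ι] (f q qbar : ι → ℝ) : Prop where
  partialSum_le : ∀ k, ∑ j with j ≤ k, f j * q j ≤ ∑ j with j ≤ k, f j * qbar j
  sum_eq : ∑ j, f j * qbar j = ∑ j, f j * q j

theorem FMajorizes_s2.sum_mul_antitone_le [Fintype ι] {f q qbar z : ι → ℝ}
    (hmaj : FMajorizes_s2 f q qbar) (hz : Antitone z) :
    ∑ i, f i * z i * q i ≤ ∑ i, f i * z i * qbar i := by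
  obtain ⟨b, hb⟩ := (Set.finite_range z).bddBelow
  have habel := mul_sum_le_sum_mul_of_antitone (d := fun j => f j * qbar j - f j * q j) hz univ
    (fun k _ => by simpa only [Finset.sum_sub_distrib, sub_nonneg] using hmaj.partialSum_le k)
    fun j _ => hb (Set.mem_range_self j)
  simpa only [Finset.sum_sub_distrib, hmaj.sum_eq, sub_self, mul_zero, mul_sub, sub_nonneg,
    mul_left_comm (z _), ← mul_assoc] using habel

end Majorization

section CellMean

variable {ι : Type*} [Fintype ι]

open Classical in
/-- The prior `f` conditioned on the cell of the state `i` in the partition of the states into the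
classes of `r`, evaluated at the state `j`. -/
noncomputable def cellPosterior (f : ι → ℝ) (r : Setoid ι) (i j : ι) : ℝ :=
  if r i j then f j / ∑ k with r i k, f k else 0

/-- The conditional expectation of `q` given the partition into the classes of `r`, under the
prior `f`. -/
noncomputable def cellMean (f : ι → ℝ) (r : Setoid ι) (q : ι → ℝ) (i : ι) : ℝ :=
  ∑ j, cellPosterior f r i j * q j

variable {f : ι → ℝ} {r : Setoid ι}

theorem cellPosterior_nonneg (hf : ∀ i, 0 ≤ f i) (i j : ι) : 0 ≤ cellPosterior f r i j := by
  unfold cellPosterior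
  split_ifs
  · exact div_nonneg (hf j) (Finset.sum_nonneg fun k _ => hf k)
  · exact le_rfl

theorem cellPosterior_eq_zero {i j : ι} (h : ¬ r i j) : cellPosterior f r i j = 0 := if_neg h

theorem cellPosterior_congr {i j : ι} (h : r i j) : cellPosterior f r i = cellPosterior f r j := by
  have hcell : r i = r j := funext fun k => propext ⟨r.trans' (r.symm' h), r.trans' h⟩
  funext k
  rw [cellPosterior, cellPosterior, hcell]

theorem sum_cellPosterior (hf : ∀ i, 0 < f i) (i : ι) : ∑ j, cellPosterior f r i j = 1 := by
  classical
  unfold cellPosterior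
  rw [← Finset.sum_filter, ← Finset.sum_div]
  exact div_self (Finset.sum_pos (fun j _ => hf j) ⟨i, by simp⟩).ne'

theorem mul_cellPosterior_comm (i j : ι) :
    f i * cellPosterior f r i j = f j * cellPosterior f r j i := by
  by_cases h : r i j
  · rw [cellPosterior_congr h, cellPosterior, cellPosterior, if_pos (r.refl' j),
      if_pos (r.symm' h)]
    exact mul_div_left_comm _ _ _
  · rw [cellPosterior_eq_zero h, cellPosterior_eq_zero fun h' => h (r.symm' h')]
    simp only [mul_zero]

theorem cellMean_congr (q : ι → ℝ) {i j : ι} (h : r i j) : cellMean f r q i = cellMean f r q j := by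
  rw [cellMean, cellPosterior_congr h, cellMean]

theorem cellMean_eq_self (hf : ∀ i, 0 < f i) {h : ι → ℝ}
    (hh : ∀ i j, r i j → h i = h j) : cellMean f r h = h := by
  ext i
  have hterm (j : ι) : cellPosterior f r i j * h j = cellPosterior f r i j * h i := by
    by_cases hij : r i j
    · rw [hh i j hij]
    · rw [cellPosterior_eq_zero hij, zero_mul, zero_mul]
  rw [cellMean, Finset.sum_congr rfl fun j _ => hterm j, ← Finset.sum_mul, sum_cellPosterior hf,
    one_mul]

theorem sum_mul_cellMean_comm (x y : ι → ℝ) :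
    ∑ i, f i * x i * cellMean f r y i = ∑ i, f i * cellMean f r x i * y i := by
  simp only [cellMean, Finset.mul_sum, Finset.sum_mul]
  rw [Finset.sum_comm]
  refine Finset.sum_congr rfl fun j _ => Finset.sum_congr rfl fun i _ => ?_
  linear_combination x i * y j * mul_cellPosterior_comm (f := f) (r := r) i j

theorem exists_sum_mul_cellMean_le [LinearOrder ι] {q qbar : ι → ℝ} (hf : ∀ i, 0 < f i)
    (hqbar : Monotone qbar) (hmaj : FMajorizes_s2 f q qbar) (c : ι → ℝ) :
    ∃ r : Setoid ι, ∑ i, f i * c i * cellMean f r q i ≤ ∑ i, f i * c i * qbar i := by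
  obtain ⟨z, hz, hzc, horth⟩ := exists_antitone_regression hf c
  refine ⟨Setoid.ker z, ?_⟩
  calc ∑ i, f i * c i * cellMean f (Setoid.ker z) q i
      = ∑ i, f i * z i * cellMean f (Setoid.ker z) q i :=
        horth _ fun i j hij => cellMean_congr q hij
    _ = ∑ i, f i * cellMean f (Setoid.ker z) z i * q i := sum_mul_cellMean_comm z q
    _ = ∑ i, f i * z i * q i := by rw [cellMean_eq_self hf fun i j hij => hij]
    _ ≤ ∑ i, f i * z i * qbar i := hmaj.sum_mul_antitone_le hz
    _ ≤ ∑ i, f i * c i * qbar i := hzc qbar hqbar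

theorem mem_convexHull_range_cellMean [LinearOrder ι] {q qbar : ι → ℝ} (hf : ∀ i, 0 < f i)
    (hqbar : Monotone qbar) (hmaj : FMajorizes_s2 f q qbar) :
    qbar ∈ convexHull ℝ (Set.range fun r => cellMean f r q) := by
  have : Finite (Setoid ι) :=
    Finite.of_injective (fun r i j => r i j) fun _ _ h =>
      Setoid.ext fun i j => (congr_fun₂ h i j).to_iff
  refine mem_convexHull_of_forall_exists_sum_mul_le (Set.finite_range _) fun c => ?_
  obtain ⟨r, hr⟩ := exists_sum_mul_cellMean_le hf hqbar hmaj fun i => c i / f i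
  simp only [mul_div_cancel₀ _ (hf _).ne'] at hr
  exact ⟨_, Set.mem_range_self r, hr⟩

end CellMean

/-- A finite Bayes-plausible posterior system for the prior `f`: signals `s` are sent with
probability `weight s` and induce beliefs `posterior s` that average to `f`. -/
structure PosteriorSystem {ι : Type*} [Fintype ι] (f : ι → ℝ) (σ : Type*) [Fintype σ] where
  weight : σ → ℝ
  posterior : σ → ι → ℝ
  weight_nonneg : ∀ s, 0 ≤ weight s
  sum_weight : ∑ s, weight s = 1
  posterior_nonneg : ∀ s i, 0 ≤ posterior s i
  sum_posterior : ∀ s, ∑ i, posterior s i = 1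
  bayes_plausible : ∀ i, ∑ s, weight s * posterior s i = f i

namespace PosteriorSystem

variable {ι σ τ κ : Type*} [Fintype ι] [Fintype σ] [Fintype τ] [Fintype κ] {f : ι → ℝ}

/-- The vector of signaled qualities induced from `q`: entry `i` is the expectation, conditional on
the state `i`, of the posterior mean of `q`. -/
noncomputable def signaledQuality (S : PosteriorSystem f σ) (q : ι → ℝ) (i : ι) : ℝ :=
  (f i)⁻¹ * ∑ s, S.weight s * S.posterior s i * ∑ j, S.posterior s j * q j

/-- The same posterior system with its signals renamed along `e`. -/
def reindex (S : PosteriorSystem f σ) (e : τ ≃ σ) : PosteriorSystem f τ where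
  weight := S.weight ∘ e
  posterior := S.posterior ∘ e
  weight_nonneg _ := S.weight_nonneg _
  sum_weight := (e.sum_comp S.weight).trans S.sum_weight
  posterior_nonneg _ := S.posterior_nonneg _
  sum_posterior _ := S.sum_posterior _
  bayes_plausible i :=
    (e.sum_comp fun s => S.weight s * S.posterior s i).trans (S.bayes_plausible i)

theorem signaledQuality_reindex (S : PosteriorSystem f σ) (e : τ ≃ σ) (q : ι → ℝ) :
    (S.reindex e).signaledQuality q = S.signaledQuality q :=
  funext fun i => congrArg ((f i)⁻¹ * ·) <|
    e.sum_comp fun s => S.weight s * S.posterior s i * ∑ j, S.posterior s j * q j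

/-- The posterior system that draws `k` with probability `α k`, reveals it, and then uses `S k`. -/
def mixture (S : κ → PosteriorSystem f σ) (α : κ → ℝ) (hα : ∀ k, 0 ≤ α k)
    (hsum : ∑ k, α k = 1) : PosteriorSystem f (κ × σ) where
  weight p := α p.1 * (S p.1).weight p.2
  posterior p := (S p.1).posterior p.2
  weight_nonneg p := mul_nonneg (hα p.1) ((S p.1).weight_nonneg p.2)
  sum_weight := by
    simp only [Fintype.sum_prod_type, ← Finset.mul_sum, sum_weight, mul_one, hsum]
  posterior_nonneg p := (S p.1).posterior_nonneg p.2
  sum_posterior p := (S p.1).sum_posterior p.2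
  bayes_plausible i := by
    simp only [Fintype.sum_prod_type, mul_assoc, ← Finset.mul_sum, bayes_plausible]
    rw [← Finset.sum_mul, hsum, one_mul]

theorem signaledQuality_mixture (S : κ → PosteriorSystem f σ) (α : κ → ℝ) (hα : ∀ k, 0 ≤ α k)
    (hsum : ∑ k, α k = 1) (q : ι → ℝ) :
    (mixture S α hα hsum).signaledQuality q = ∑ k, α k • (S k).signaledQuality q := by
  ext i
  simp only [signaledQuality, mixture, Fintype.sum_prod_type, mul_assoc, ← Finset.mul_sum,
    Finset.sum_apply, Pi.smul_apply, smul_eq_mul]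
  rw [Finset.mul_sum]
  exact Finset.sum_congr rfl fun k _ => mul_left_comm _ _ _

/-- The posterior system that reveals the class of the state modulo `r`. Its signals are the states
themselves, and equivalent states are synonymous signals. -/
noncomputable def pooling (hf : ∀ i, 0 < f i) (hfsum : ∑ i, f i = 1) (r : Setoid ι) :
    PosteriorSystem f ι where
  weight := f
  posterior := cellPosterior f r
  weight_nonneg i := (hf i).le
  sum_weight := hfsum
  posterior_nonneg := cellPosterior_nonneg fun i => (hf i).le
  sum_posterior := sum_cellPosterior hf
  bayes_plausible i := by
    simp only [mul_cellPosterior_comm _ i, ← Finset.mul_sum, sum_cellPosterior hf, mul_one]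

theorem signaledQuality_pooling (hf : ∀ i, 0 < f i) (hfsum : ∑ i, f i = 1) (r : Setoid ι)
    (q : ι → ℝ) : (pooling hf hfsum r).signaledQuality q = cellMean f r q := by
  ext i
  have hidem : ∑ s, cellPosterior f r i s * cellMean f r q s = cellMean f r q i :=
    congrFun (cellMean_eq_self hf fun _ _ => cellMean_congr q) i
  change (f i)⁻¹ * ∑ s, f s * cellPosterior f r s i * cellMean f r q s = cellMean f r q i
  simp only [mul_cellPosterior_comm _ i, mul_assoc, ← Finset.mul_sum, hidem]
  exact inv_mul_cancel_left₀ (hf i).ne' _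

end PosteriorSystem

open PosteriorSystem in
theorem majorization_implies_implementable_general {ι : Type*} [Fintype ι] [LinearOrder ι]
    {f q qbar : ι → ℝ} (hf : ∀ i, 0 < f i) (hfsum : ∑ i, f i = 1) (hqbar : Monotone qbar)
    (hmaj : FMajorizes_s2 f q qbar) :
    ∃ (K : ℕ) (S : PosteriorSystem f (Fin K)), S.signaledQuality q = qbar := by
  obtain ⟨κ, _, α, y, hα, hαsum, hy, hqbar_eq⟩ :=
    mem_convexHull_iff_exists_fintype.1 (mem_convexHull_range_cellMean hf hqbar hmaj)
  choose r hr using hy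
  let S := mixture (fun k => pooling hf hfsum (r k)) α hα hαsum
  refine ⟨_, S.reindex (Fintype.equivFin _).symm, ?_⟩
  calc (S.reindex (Fintype.equivFin _).symm).signaledQuality q
      = ∑ k, α k • (pooling hf hfsum (r k)).signaledQuality q := by
        rw [signaledQuality_reindex, signaledQuality_mixture]
    _ = ∑ k, α k • y k := by simp only [signaledQuality_pooling, hr]
    _ = qbar := hqbar_eq

/-- If `q` F-majorizes `q̄` (with both nondecreasing and `q̄`
constant on level sets of `q`), then `q̄` is the vector of signaled qualities
induced from `q` by some finite Bayes-plausible posterior system for `f`. -/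
theorem majorization_implies_implementable
    (N : ℕ) (hN : 0 < N)
    (f : Fin N → ℝ) (hf : ∀ i, 0 < f i) (hfsum : ∑ i, f i = 1)
    (q qbar : Fin N → ℝ)
    (hq : ∀ i j : Fin N, i ≤ j → q i ≤ q j)
    (hqbar : ∀ i j : Fin N, i ≤ j → qbar i ≤ qbar j)
    (hconst : ∀ i j : Fin N, q i = q j → qbar i = qbar j)
    (hmaj : ∀ k : Fin N,
      ∑ j ∈ Finset.filter (fun j => j ≤ k) Finset.univ, f j * qbar j ≥
      ∑ j ∈ Finset.filter (fun j => j ≤ k) Finset.univ, f j * q j)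
    (hmajEq : ∑ j, f j * qbar j = ∑ j, f j * q j) :
    ∃ (K : ℕ) (w : Fin K → ℝ) (μ : Fin K → Fin N → ℝ),
      (∀ s, 0 ≤ w s) ∧ (∑ s, w s = 1) ∧
      (∀ s i, 0 ≤ μ s i) ∧ (∀ s, ∑ i, μ s i = 1) ∧
      (∀ i, ∑ s, w s * μ s i = f i) ∧
      (∀ i, qbar i = (f i)⁻¹ * ∑ s, w s * μ s i * (∑ j, μ s j * q j)) := by
  obtain ⟨K, S, hS⟩ := majorization_implies_implementable_general hf hfsum hqbar ⟨hmaj, hmajEq⟩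
  exact ⟨K, S.weight, S.posterior, S.weight_nonneg, S.sum_weight, S.posterior_nonneg,
    S.sum_posterior, S.bayes_plausible, fun i => (congrFun hS i).symm⟩
end

section
/- Let N be a positive integer, f : Fin N → ℝ with f i > 0 for all i and ∑ i, f i = 1, and q : Fin N → ℝ. The set S of all vectors r : Fin N → ℝ for which there exists a finite Bayes-plausible posterior system (K, w, μ) for f with r i = (f i)⁻¹ * ∑ s, w s * μ s i * (∑ j, μ s j * q j) for every i, is a convex subset of (Fin N → ℝ). -/
open Finset

/-!
A posterior `p` of value `v p` (here `v p = ∑ j, p j * q j`) contributes the pair `(p, v p • p)`.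
Averaging these pairs over the signals gives `(f, f * r)`: the first coordinate is Bayes
plausibility, the second is the signaled quality `r` with its denominator `f` cleared. Hence `r` is
attainable exactly when `(f, f * r)` lies in the convex hull of the graph of `p ↦ v p • p` over the
simplex. This hull is convex and `r ↦ (f, f * r)` is affine, so the attainable `r` form a convex
set.
-/

section ConvexHull

variable {𝕜 E F : Type*} [Field 𝕜] [LinearOrder 𝕜] [IsStrictOrderedRing 𝕜]
  [AddCommGroup E] [Module 𝕜 E] [AddCommGroup F] [Module 𝕜 F]

theorem mem_convexHull_iff_exists_fin {X : Set E} {x : E} :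
    x ∈ convexHull 𝕜 X ↔ ∃ (K : ℕ) (w : Fin K → 𝕜) (z : Fin K → E),
      (∀ s, 0 ≤ w s) ∧ ∑ s, w s = 1 ∧ (∀ s, z s ∈ X) ∧ ∑ s, w s • z s = x := by
  constructor
  · intro hx
    obtain ⟨ι, _, w, z, hw, hw_sum, hz, hx⟩ := mem_convexHull_iff_exists_fintype.1 hx
    let e := (Fintype.equivFin ι).symm
    exact ⟨Fintype.card ι, w ∘ e, z ∘ e, fun s ↦ hw (e s), (e.sum_comp w).trans hw_sum,
      fun s ↦ hz (e s), (e.sum_comp fun i ↦ w i • z i).trans hx⟩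
  · rintro ⟨K, w, z, hw, hw_sum, hz, hx⟩
    exact mem_convexHull_of_exists_fintype w z hw hw_sum hz hx

theorem mk_mem_convexHull_graphOn_iff {X : Set E} {φ : E → F} {x : E} {y : F} :
    (x, y) ∈ convexHull 𝕜 (X.graphOn φ) ↔ ∃ (K : ℕ) (w : Fin K → 𝕜) (p : Fin K → E),
      (∀ s, 0 ≤ w s) ∧ ∑ s, w s = 1 ∧ (∀ s, p s ∈ X) ∧
        ∑ s, w s • p s = x ∧ ∑ s, w s • φ (p s) = y := by
  rw [mem_convexHull_iff_exists_fin]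
  constructor
  · rintro ⟨K, w, z, hw, hw_sum, hz, hxy⟩
    choose p hp hpz using hz
    obtain rfl : z = fun s ↦ (p s, φ (p s)) := funext fun s ↦ (hpz s).symm
    simp only [Prod.smul_mk, ← prod_mk_sum, Prod.mk.injEq] at hxy
    exact ⟨K, w, p, hw, hw_sum, hp, hxy⟩
  · rintro ⟨K, w, p, hw, hw_sum, hp, rfl, rfl⟩
    exact ⟨K, w, fun s ↦ (p s, φ (p s)), hw, hw_sum, fun s ↦ Set.mem_image_of_mem _ (hp s),
      by simp only [Prod.smul_mk, prod_mk_sum]⟩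

end ConvexHull

theorem signaled_quality_set_convex_general
    {𝕜 ι : Type*} [Field 𝕜] [LinearOrder 𝕜] [IsStrictOrderedRing 𝕜] [Fintype ι]
    (f : ι → 𝕜) (v : (ι → 𝕜) → 𝕜) :
    Convex 𝕜 {r : ι → 𝕜 |
      ∃ (K : ℕ) (w : Fin K → 𝕜) (μ : Fin K → ι → 𝕜),
        (∀ s, 0 ≤ w s) ∧ ∑ s, w s = 1 ∧ (∀ s, μ s ∈ stdSimplex 𝕜 ι) ∧
        ∑ s, w s • μ s = f ∧ ∑ s, w s • v (μ s) • μ s = f * r} := by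
  let Φ : (ι → 𝕜) →ᵃ[𝕜] (ι → 𝕜) × (ι → 𝕜) :=
    (AffineMap.const 𝕜 (ι → 𝕜) f).prod (LinearMap.mulLeft 𝕜 f).toAffineMap
  have hull_preimage_convex : Convex 𝕜 {r : ι → 𝕜 |
      (f, f * r) ∈ convexHull 𝕜 ((stdSimplex 𝕜 ι).graphOn fun p ↦ v p • p)} :=
    (convex_convexHull 𝕜 _).affine_preimage Φ
  simpa only [mk_mem_convexHull_graphOn_iff] using hull_preimage_convex

/-- The set of signaled-quality vectors `r` induced from `q` by
some finite Bayes-plausible posterior system for `f` is a convex subset of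
`Fin N → ℝ`. -/
theorem signaled_quality_set_convex
    (N : ℕ) (hN : 0 < N)
    (f : Fin N → ℝ) (hf : ∀ i, 0 < f i) (hfsum : ∑ i, f i = 1)
    (q : Fin N → ℝ) :
    Convex ℝ {r : Fin N → ℝ |
      ∃ (K : ℕ) (w : Fin K → ℝ) (μ : Fin K → Fin N → ℝ),
        (∀ s, 0 ≤ w s) ∧ (∑ s, w s = 1) ∧
        (∀ s i, 0 ≤ μ s i) ∧ (∀ s, ∑ i, μ s i = 1) ∧
        (∀ i, ∑ s, w s * μ s i = f i) ∧
        (∀ i, r i = (f i)⁻¹ * ∑ s, w s * μ s i * (∑ j, μ s j * q j))} := by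
  simp only [eq_inv_mul_iff_mul_eq₀ (hf _).ne', mul_assoc]
  simpa [stdSimplex, forall_and, and_assoc, funext_iff, mul_comm, mul_left_comm, eq_comm] using
    signaled_quality_set_convex_general f fun p ↦ ∑ j, p j * q j
end

section
/- Let N be a positive integer, f : Fin N → ℝ with f i > 0 for all i, and λ : Fin N → ℝ with λ i ≥ 0 for all i and such that i ≤ j implies λ i * f j ≤ λ j * f i (i.e., λ i / f i is nondecreasing in i). Let q, q̄ : Fin N → ℝ satisfy: for every k, ∑_{j ≤ k} f j * q̄ j ≥ ∑_{j ≤ k} f j * q j, and ∑ j, f j * q̄ j = ∑ j, f j * q j. Then ∑ i, λ i * q̄ i ≤ ∑ i, λ i * q i. -/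
open Finset

/-!
Put `m i = lam i / f i`, which is monotone, and `d i = f i * qbar i - f i * q i`, whose partial sums
are nonnegative and whose total is zero. Since `lam i * (qbar i - q i) = m i * d i`, Abel's
inequality `∑ m i * d i ≤ c * ∑ d i`, where `c` is an upper bound of `m`, gives the claim.
-/

variable {ι R M : Type*} [LinearOrder ι]

theorem sum_smul_le_smul_sum_of_partial_sums_nonneg [Semiring R] [Preorder R] [AddCommMonoid M]
    [Preorder M] [IsOrderedAddMonoid M] [Module R M] [SMulPosMono R M]
    {s : Finset ι} {m : ι → R} {d : ι → M} {c : R} (hm : MonotoneOn m s)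
    (hd : ∀ k ∈ s, 0 ≤ ∑ j ∈ s with j ≤ k, d j) (hc : ∀ i ∈ s, m i ≤ c) :
    ∑ i ∈ s, m i • d i ≤ c • ∑ i ∈ s, d i := by
  induction s using Finset.induction_on_max generalizing c with
  | empty => simp
  | insert a s hlt ih =>
    have ha : a ∉ s := fun h ↦ (hlt a h).false
    have hd_s : ∀ k ∈ s, 0 ≤ ∑ j ∈ s with j ≤ k, d j := fun k hk ↦ by
      simpa only [filter_insert, (hlt k hk).not_ge, if_false] using hd k (mem_insert_of_mem hk)
    have hle_a : ∀ i ∈ insert a s, i ≤ a := by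
      simpa only [forall_mem_insert, le_refl, true_and] using fun i hi ↦ (hlt i hi).le
    have hm_le : ∀ i ∈ s, m i ≤ m a := fun i hi ↦
      hm (mem_insert_of_mem hi) (mem_insert_self a s) (hlt i hi).le
    have hsum : 0 ≤ ∑ i ∈ insert a s, d i := by
      simpa only [filter_true_of_mem hle_a] using hd a (mem_insert_self a s)
    calc ∑ i ∈ insert a s, m i • d i
        = m a • d a + ∑ i ∈ s, m i • d i := sum_insert ha
      _ ≤ m a • d a + m a • ∑ i ∈ s, d i := by
          gcongr
          exact ih (hm.mono (mod_cast subset_insert a s)) hd_s hm_le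
      _ = m a • ∑ i ∈ insert a s, d i := by rw [sum_insert ha, smul_add]
      _ ≤ c • ∑ i ∈ insert a s, d i :=
          smul_le_smul_of_nonneg_right (hc a (mem_insert_self a s)) hsum

variable [Fintype ι] [AddCommGroup M] [Preorder M]

/-- `WeightedMajorizes f q qbar` is the relation "`q` F-majorizes `qbar`" between quality vectors,
where the weights `f` are the point masses of the prior `F` and need not sum to one. The partial
sums run upwards from the smallest index, so the majorized vector has the larger ones. -/
structure WeightedMajorizes [Semiring R] [Module R M] (f : ι → R) (q qbar : ι → M) : Prop where
  partial_sum_le : ∀ k, ∑ j with j ≤ k, f j • q j ≤ ∑ j with j ≤ k, f j • qbar j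
  sum_eq : ∑ j, f j • qbar j = ∑ j, f j • q j

theorem WeightedMajorizes.sum_smul_smul_le [IsOrderedAddMonoid M] [Semiring R]
    [Preorder R] [IsDirectedOrder R] [Module R M] [SMulPosMono R M]
    {f m : ι → R} {q qbar : ι → M}
    (h : WeightedMajorizes f q qbar) (hm : Monotone m) :
    ∑ i, m i • f i • qbar i ≤ ∑ i, m i • f i • q i := by
  obtain ⟨c, hc⟩ := Finite.bddAbove_range m
  have hpartial : ∀ k ∈ univ, 0 ≤ ∑ j with j ≤ k, (f j • qbar j - f j • q j) := fun k _ ↦ by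
    simpa only [sum_sub_distrib, sub_nonneg] using h.partial_sum_le k
  have habel := sum_smul_le_smul_sum_of_partial_sums_nonneg (hm.monotoneOn _) hpartial
    fun i _ ↦ hc (Set.mem_range_self i)
  simpa only [smul_sub, sum_sub_distrib, h.sum_eq, sub_self, smul_zero, sub_nonpos] using habel

theorem increasing_weights_full_info_general {K : Type*} [IsOrderedAddMonoid M] [Field K]
    [LinearOrder K] [IsStrictOrderedRing K] [Module K M] [SMulPosMono K M]
    {f lam : ι → K} {q qbar : ι → M}
    (hf : ∀ i, 0 < f i) (hmono : ∀ i j, i ≤ j → lam i * f j ≤ lam j * f i)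
    (hmaj : WeightedMajorizes f q qbar) :
    ∑ i, lam i • qbar i ≤ ∑ i, lam i • q i := by
  have hratio : Monotone fun i ↦ lam i / f i := fun i j hij ↦
    (div_le_div_iff₀ (hf i) (hf j)).mpr (hmono i j hij)
  simpa only [smul_smul, div_mul_cancel₀ _ (hf _).ne'] using hmaj.sum_smul_smul_le hratio

/-- If `λ i / f i` is nondecreasing in `i` (with `λ ≥ 0`) and `q`
F-majorizes `q̄`, then the λ-weighted sum of `q̄` is at most that of `q`:
full information maximizes the weighted objective. -/
theorem increasing_weights_full_info
    (N : ℕ) (hN : 0 < N)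
    (f : Fin N → ℝ) (hf : ∀ i, 0 < f i)
    (lam : Fin N → ℝ) (hlam : ∀ i, 0 ≤ lam i)
    (hmono : ∀ i j : Fin N, i ≤ j → lam i * f j ≤ lam j * f i)
    (q qbar : Fin N → ℝ)
    (hmaj : ∀ k : Fin N,
      ∑ j ∈ Finset.filter (fun j => j ≤ k) Finset.univ, f j * qbar j ≥
      ∑ j ∈ Finset.filter (fun j => j ≤ k) Finset.univ, f j * q j)
    (hmajEq : ∑ j, f j * qbar j = ∑ j, f j * q j) :
    ∑ i, lam i * qbar i ≤ ∑ i, lam i * q i :=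
  increasing_weights_full_info_general hf hmono ⟨hmaj, hmajEq⟩
end

section
/- Let f₁, f₂ > 0 with f₁ + f₂ = 1, and let q₁ ≤ q₂ and q̄₁ ≤ q̄₂ be real numbers with f₁*q̄₁ + f₂*q̄₂ = f₁*q₁ + f₂*q₂ and f₁*q̄₁ ≥ f₁*q₁. Then, setting m = f₁*q₁ + f₂*q₂, there exists α ∈ [0,1] such that q̄₁ = α*q₁ + (1-α)*m and q̄₂ = α*q₂ + (1-α)*m; that is, the vector (q̄₁, q̄₂) lies on the segment joining (q₁, q₂) to the no-information point (m, m). -/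
/-!
With the weights fixed, a pair `(x₁, x₂)` of mean `m` and gap `δ = x₂ - x₁` is
`(m - f₂ * δ, m + f₁ * δ)`. Along the line of pairs with mean `m` the gap is therefore an affine
coordinate: it is `0` at `(m, m)` and `q₂ - q₁` at `(q₁, q₂)`. Majorization raises the lower value
and, the mean being preserved, lowers the upper one, so the gap of a majorized pair lies between
these two values, and the ratio of the gaps is the weight `α` of full revelation.
-/

section MeanAndGap

variable {R : Type*} [CommRing R] {f₁ f₂ : R}

theorem fst_eq_mean_sub_mul_gap (hfsum : f₁ + f₂ = 1) (x₁ x₂ : R) :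
    x₁ = f₁ * x₁ + f₂ * x₂ - f₂ * (x₂ - x₁) := by
  linear_combination -x₁ * hfsum

theorem snd_eq_mean_add_mul_gap (hfsum : f₁ + f₂ = 1) (x₁ x₂ : R) :
    x₂ = f₁ * x₁ + f₂ * x₂ + f₁ * (x₂ - x₁) := by
  linear_combination -x₂ * hfsum

theorem fst_eq_of_mean_eq_of_gap_eq_mul {x₁ x₂ y₁ y₂ α : R} (hfsum : f₁ + f₂ = 1)
    (hmean : f₁ * y₁ + f₂ * y₂ = f₁ * x₁ + f₂ * x₂) (hgap : y₂ - y₁ = α * (x₂ - x₁)) :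
    y₁ = α * x₁ + (1 - α) * (f₁ * x₁ + f₂ * x₂) :=
  calc
    y₁ = f₁ * x₁ + f₂ * x₂ - f₂ * (α * (x₂ - x₁)) := by
      rw [← hmean, ← hgap, ← fst_eq_mean_sub_mul_gap hfsum]
    _ = α * (f₁ * x₁ + f₂ * x₂ - f₂ * (x₂ - x₁)) + (1 - α) * (f₁ * x₁ + f₂ * x₂) := by ring
    _ = α * x₁ + (1 - α) * (f₁ * x₁ + f₂ * x₂) := by rw [← fst_eq_mean_sub_mul_gap hfsum]

theorem snd_eq_of_mean_eq_of_gap_eq_mul {x₁ x₂ y₁ y₂ α : R} (hfsum : f₁ + f₂ = 1)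
    (hmean : f₁ * y₁ + f₂ * y₂ = f₁ * x₁ + f₂ * x₂) (hgap : y₂ - y₁ = α * (x₂ - x₁)) :
    y₂ = α * x₂ + (1 - α) * (f₁ * x₁ + f₂ * x₂) :=
  calc
    y₂ = f₁ * x₁ + f₂ * x₂ + f₁ * (α * (x₂ - x₁)) := by
      rw [← hmean, ← hgap, ← snd_eq_mean_add_mul_gap hfsum]
    _ = α * (f₁ * x₁ + f₂ * x₂ + f₁ * (x₂ - x₁)) + (1 - α) * (f₁ * x₁ + f₂ * x₂) := by ring
    _ = α * x₂ + (1 - α) * (f₁ * x₁ + f₂ * x₂) := by rw [← snd_eq_mean_add_mul_gap hfsum]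

end MeanAndGap

theorem gap_le_gap_of_majorized {R : Type*} [CommRing R] [LinearOrder R] [IsStrictOrderedRing R]
    {f₁ f₂ x₁ x₂ y₁ y₂ : R} (hf₁ : 0 < f₁) (hf₂ : 0 < f₂)
    (htot : f₁ * y₁ + f₂ * y₂ = f₁ * x₁ + f₂ * x₂) (hmaj : f₁ * x₁ ≤ f₁ * y₁) :
    y₂ - y₁ ≤ x₂ - x₁ := by
  have lower_le : x₁ ≤ y₁ := le_of_mul_le_mul_left hmaj hf₁
  have upper_le : y₂ ≤ x₂ := le_of_mul_le_mul_left (by linarith) hf₂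
  exact sub_le_sub upper_le lower_le

theorem exists_mem_Icc_zero_one_eq_mul {K : Type*} [Semifield K] [LinearOrder K]
    [IsStrictOrderedRing K] {a b : K} (ha : 0 ≤ a) (hab : a ≤ b) :
    ∃ α ∈ Set.Icc (0 : K) 1, a = α * b := by
  have hb : 0 ≤ b := ha.trans hab
  -- If `b = 0` then `a = 0`, and the convention `a / 0 = 0` still gives a valid ratio.
  refine ⟨a / b, ⟨div_nonneg ha hb, div_le_one_of_le₀ hab hb⟩, ?_⟩
  exact (div_mul_cancel_of_imp fun hb₀ => le_antisymm (hab.trans_eq hb₀) ha).symm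

theorem two_type_segment_general {K : Type*} [Field K] [LinearOrder K] [IsStrictOrderedRing K]
    {f₁ f₂ q₁ q₂ qbar₁ qbar₂ : K}
    (hf₁ : 0 < f₁) (hf₂ : 0 < f₂) (hfsum : f₁ + f₂ = 1) (hqbar : qbar₁ ≤ qbar₂)
    (htot : f₁ * qbar₁ + f₂ * qbar₂ = f₁ * q₁ + f₂ * q₂) (hmaj : f₁ * q₁ ≤ f₁ * qbar₁) :
    ∃ α ∈ Set.Icc (0 : K) 1,
      qbar₁ = α * q₁ + (1 - α) * (f₁ * q₁ + f₂ * q₂) ∧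
      qbar₂ = α * q₂ + (1 - α) * (f₁ * q₁ + f₂ * q₂) := by
  have gap_nonneg : 0 ≤ qbar₂ - qbar₁ := sub_nonneg.mpr hqbar
  have gap_le : qbar₂ - qbar₁ ≤ q₂ - q₁ := gap_le_gap_of_majorized hf₁ hf₂ htot hmaj
  obtain ⟨α, hα, hgap⟩ := exists_mem_Icc_zero_one_eq_mul gap_nonneg gap_le
  exact ⟨α, hα, fst_eq_of_mean_eq_of_gap_eq_mul hfsum htot hgap,
    snd_eq_of_mean_eq_of_gap_eq_mul hfsum htot hgap⟩

/-- Two-type case: any majorized signaled-quality pair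
`(q̄₁, q̄₂)` lies on the segment joining full revelation `(q₁, q₂)` to the
no-information point `(m, m)` with `m = f₁*q₁ + f₂*q₂`. -/
theorem two_type_segment
    (f₁ f₂ q₁ q₂ qbar₁ qbar₂ : ℝ)
    (hf₁ : 0 < f₁) (hf₂ : 0 < f₂) (hfsum : f₁ + f₂ = 1)
    (hq : q₁ ≤ q₂) (hqbar : qbar₁ ≤ qbar₂)
    (htot : f₁ * qbar₁ + f₂ * qbar₂ = f₁ * q₁ + f₂ * q₂)
    (hmaj : f₁ * qbar₁ ≥ f₁ * q₁) :
    ∃ α ∈ Set.Icc (0 : ℝ) 1,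
      qbar₁ = α * q₁ + (1 - α) * (f₁ * q₁ + f₂ * q₂) ∧
      qbar₂ = α * q₂ + (1 - α) * (f₁ * q₁ + f₂ * q₂) := by
  exact two_type_segment_general hf₁ hf₂ hfsum hqbar htot hmaj
end

section
/- Let N be a positive integer, f : Fin N → ℝ with f i > 0 for all i, and A : Fin N → Fin N → ℝ with A i j ≥ 0 for all i, j, ∑ i, f i * A i j = f j for every j, and ∑ j, A i j = 1 for every i. Let q : Fin N → ℝ be monotone nondecreasing, fix k ∈ Fin N, and suppose q k < q j for every j > k. Set q̄ i = ∑ j, A i j * q j. If ∑_{i ≤ k} f i * q̄ i = ∑_{i ≤ k} f i * q i (the majorization inequality binds at k), then A i j = 0 for every i ≤ k and every j > k. -/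
open Finset

/-!
Let `w j` be the mass that `A` sends from a block `s` of types to type `j`. Since `f` is stationary,
`w ≤ f`, and since the rows of `A` sum to one, `w` has the same total mass as `f` on `s`. Hence
`w` arises from `f` restricted to `s` by moving the mass `f j - w j` out of each `j ∈ s` and putting
`w j` on each `j ∉ s`. If `c` separates the qualities on `s` from those off `s`, all of this mass
crosses the level `c` upwards, so total quality cannot fall, and it is unchanged only if `w`
vanishes off `s`.
-/

section MassFrom

variable {ι κ R : Type*}

/-- The mass arriving at `j` from the block `s` when a fraction `A i j` of the mass `f i` at each
`i` is sent to `j`; as a row vector in `j`, this is the restriction of `f` to `s` times `A`. -/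
def massFrom [Semiring R] (f : ι → R) (A : ι → κ → R) (s : Finset ι) (j : κ) : R :=
  ∑ i ∈ s, f i * A i j

theorem sum_massFrom [Semiring R] [Fintype κ] (f : ι → R) {A : ι → κ → R} {s : Finset ι}
    (hA : ∀ i ∈ s, ∑ j, A i j = 1) : ∑ j, massFrom f A s j = ∑ i ∈ s, f i := by
  unfold massFrom
  rw [sum_comm]
  exact sum_congr rfl fun i hi ↦ by rw [← mul_sum, hA i hi, mul_one]

theorem sum_massFrom_mul [Semiring R] [Fintype κ] (f : ι → R) (A : ι → κ → R) (s : Finset ι)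
    (q : κ → R) : ∑ j, massFrom f A s j * q j = ∑ i ∈ s, f i * ∑ j, A i j * q j := by
  simp only [massFrom, sum_mul, mul_sum, mul_assoc]
  exact sum_comm

theorem massFrom_nonneg [Semiring R] [PartialOrder R] [IsOrderedRing R] {f : ι → R}
    {A : ι → κ → R} {s : Finset ι} {j : κ} (hf : ∀ i ∈ s, 0 ≤ f i) (hA : ∀ i ∈ s, 0 ≤ A i j) :
    0 ≤ massFrom f A s j :=
  sum_nonneg fun i hi ↦ mul_nonneg (hf i hi) (hA i hi)

theorem massFrom_mono [Semiring R] [PartialOrder R] [IsOrderedRing R] {f : ι → R}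
    {A : ι → κ → R} {s t : Finset ι} {j : κ} (hst : s ⊆ t) (hf : ∀ i ∈ t, 0 ≤ f i)
    (hA : ∀ i ∈ t, 0 ≤ A i j) : massFrom f A s j ≤ massFrom f A t j :=
  sum_le_sum_of_subset_of_nonneg hst fun i hi _ ↦ mul_nonneg (hf i hi) (hA i hi)

theorem massFrom_eq_zero_iff [Ring R] [LinearOrder R] [IsStrictOrderedRing R] {f : ι → R}
    {A : ι → κ → R} {s : Finset ι} {j : κ} (hf : ∀ i ∈ s, 0 < f i) (hA : ∀ i ∈ s, 0 ≤ A i j) :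
    massFrom f A s j = 0 ↔ ∀ i ∈ s, A i j = 0 := by
  unfold massFrom
  rw [sum_eq_zero_iff_of_nonneg fun i hi ↦ mul_nonneg (hf i hi).le (hA i hi)]
  exact forall₂_congr fun i hi ↦ mul_eq_zero_iff_left (hf i hi).ne'

end MassFrom

section Threshold

variable {ι R : Type*} [Fintype ι] [Ring R]

theorem sum_mul_sub_sum_mul_of_sum_eq [DecidableEq ι] {s : Finset ι} {w f : ι → R}
    (hwf : ∑ i, w i = ∑ i ∈ s, f i) (q : ι → R) (c : R) :
    ∑ i, w i * q i - ∑ i ∈ s, f i * q i =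
      ∑ i ∈ s, (f i - w i) * (c - q i) + ∑ i ∈ sᶜ, w i * (q i - c) := by
  have hmass : (∑ i ∈ s, w i) * c + (∑ i ∈ sᶜ, w i) * c = (∑ i ∈ s, f i) * c := by
    rw [← add_mul, sum_add_sum_compl, hwf]
  simp only [sub_mul, mul_sub, sum_sub_distrib, ← sum_mul, ← hmass,
    ← sum_add_sum_compl s fun i ↦ w i * q i]
  abel

theorem eq_zero_of_sum_eq_of_sum_mul_eq [LinearOrder R] [IsStrictOrderedRing R] {s : Finset ι}
    {w f q : ι → R} {c : R} (hqs : ∀ i ∈ s, q i ≤ c) (hqc : ∀ i ∉ s, c < q i)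
    (hws : ∀ i ∈ s, w i ≤ f i) (hwc : ∀ i ∉ s, 0 ≤ w i) (hsum : ∑ i, w i = ∑ i ∈ s, f i)
    (hmul : ∑ i, w i * q i = ∑ i ∈ s, f i * q i) {j : ι} (hj : j ∉ s) : w j = 0 := by
  classical
  have hin : 0 ≤ ∑ i ∈ s, (f i - w i) * (c - q i) := sum_nonneg fun i hi ↦
    mul_nonneg (sub_nonneg.2 (hws i hi)) (sub_nonneg.2 (hqs i hi))
  have hout : ∀ i ∈ sᶜ, 0 ≤ w i * (q i - c) := fun i hi ↦
    mul_nonneg (hwc i (mem_compl.1 hi)) (sub_nonneg.2 (hqc i (mem_compl.1 hi)).le)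
  have hgap : ∑ i ∈ s, (f i - w i) * (c - q i) + ∑ i ∈ sᶜ, w i * (q i - c) = 0 := by
    rw [← sum_mul_sub_sum_mul_of_sum_eq hsum, hmul, sub_self]
  have hout_zero : ∑ i ∈ sᶜ, w i * (q i - c) = 0 :=
    ((add_eq_zero_iff_of_nonneg hin (sum_nonneg hout)).1 hgap).2
  have hj_zero : w j * (q j - c) = 0 :=
    (sum_eq_zero_iff_of_nonneg hout).1 hout_zero j (mem_compl.2 hj)
  exact (mul_eq_zero.1 hj_zero).resolve_right (sub_pos.2 (hqc j hj)).ne'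

end Threshold

theorem binding_majorization_separates_general {ι R : Type*} [Fintype ι] [Ring R] [LinearOrder R]
    [IsStrictOrderedRing R] {f : ι → R} (hf : ∀ i, 0 < f i) {A : ι → ι → R}
    (hA : ∀ i j, 0 ≤ A i j) (hAf : ∀ j, ∑ i, f i * A i j = f j) (hA1 : ∀ i, ∑ j, A i j = 1)
    {q : ι → R} {s : Finset ι} {c : R} (hqs : ∀ i ∈ s, q i ≤ c) (hqc : ∀ i ∉ s, c < q i)
    (hbind : ∑ i ∈ s, f i * ∑ j, A i j * q j = ∑ i ∈ s, f i * q i)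
    {i j : ι} (hi : i ∈ s) (hj : j ∉ s) : A i j = 0 := by
  have hle (j : ι) : massFrom f A s j ≤ f j :=
    (massFrom_mono (subset_univ s) (fun i _ ↦ (hf i).le) fun i _ ↦ hA i j).trans_eq (hAf j)
  have hnonneg (j : ι) : 0 ≤ massFrom f A s j :=
    massFrom_nonneg (fun i _ ↦ (hf i).le) fun i _ ↦ hA i j
  have hzero : massFrom f A s j = 0 :=
    eq_zero_of_sum_eq_of_sum_mul_eq hqs hqc (fun j _ ↦ hle j) (fun j _ ↦ hnonneg j)
      (sum_massFrom f fun i _ ↦ hA1 i) ((sum_massFrom_mul f A s q).trans hbind) hj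
  exact (massFrom_eq_zero_iff (fun i _ ↦ hf i) fun i _ ↦ hA i j).1 hzero i hi

/-- Separation: if the majorization inequality binds at index `k`
(and `q` strictly increases past `k`), then the mixing matrix `A` has zero
entries linking types at or below `k` to types above `k`. -/
theorem binding_majorization_separates
    (N : ℕ) (hN : 0 < N)
    (f : Fin N → ℝ) (hf : ∀ i, 0 < f i)
    (A : Fin N → Fin N → ℝ)
    (hApos : ∀ i j, 0 ≤ A i j)
    (hAf : ∀ j, ∑ i, f i * A i j = f j)
    (hAe : ∀ i, ∑ j, A i j = 1)
    (q : Fin N → ℝ) (hq : ∀ i j : Fin N, i ≤ j → q i ≤ q j)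
    (k : Fin N) (hk : ∀ j : Fin N, k < j → q k < q j)
    (qbar : Fin N → ℝ) (hqbar : ∀ i, qbar i = ∑ j, A i j * q j)
    (hbind : ∑ i ∈ Finset.filter (fun i => i ≤ k) Finset.univ, f i * qbar i =
             ∑ i ∈ Finset.filter (fun i => i ≤ k) Finset.univ, f i * q i) :
    ∀ i j : Fin N, i ≤ k → k < j → A i j = 0 := by
  simp only [hqbar] at hbind
  exact fun i j hi hj ↦ binding_majorization_separates_general hf hApos hAf hAe (c := q k)
    (by simpa using fun i ↦ hq i k) (by simpa using hk) hbind
    (by simpa using hi) (by simpa using hj)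
end

section
/- Let a < b be real numbers, g : ℝ → ℝ be monotone nonincreasing on [a,b], and f : ℝ → ℝ be nonnegative on [a,b], with the product g*f integrable on [a,b]. If ∫_a^b g(t) * f(t) dt = 0, then for every c ∈ [a,b], ∫_a^c g(t) * f(t) dt ≥ 0. -/
open MeasureTheory

/-!
An antitone `g` either is still nonnegative throughout a lower set, and then so is the integral of
`g * f` over it, or is already nonpositive throughout the complement, and then the integral over
the lower set is at least the total.
-/

open Set

theorem antitoneOn_forall_le_inter_or_forall_ge_sdiff {α β : Type*} [LinearOrder α] [LinearOrder β]
    {g : α → β} {s t : Set α} (hg : AntitoneOn g s) (ht : IsLowerSet t) (y : β) :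
    (∀ x ∈ s ∩ t, y ≤ g x) ∨ ∀ x ∈ s \ t, g x ≤ y := by
  by_contra! ⟨⟨u, ⟨hus, hut⟩, hu⟩, v, ⟨hvs, hvt⟩, hv⟩
  have huv : u ≤ v := le_of_not_ge fun hvu => hvt (ht hvu hut)
  exact ((hg hus hvs huv).trans_lt hu).not_gt hv

theorem setIntegral_le_setIntegral_inter_of_ae_nonpos_sdiff {α E : Type*} [MeasurableSpace α]
    [NormedAddCommGroup E] [NormedSpace ℝ E] [PartialOrder E] [IsOrderedAddMonoid E]
    [IsOrderedModule ℝ E] [ClosedIciTopology E] {μ : Measure α} {h : α → E} {s t : Set α}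
    (ht : MeasurableSet t) (hint : IntegrableOn h s μ) (h_nonpos : h ≤ᵐ[μ.restrict (s \ t)] 0) :
    ∫ x in s, h x ∂μ ≤ ∫ x in s ∩ t, h x ∂μ :=
  calc ∫ x in s, h x ∂μ = ∫ x in s ∩ t, h x ∂μ + ∫ x in s \ t, h x ∂μ :=
        (integral_inter_add_sdiff ht hint).symm
    _ ≤ ∫ x in s ∩ t, h x ∂μ := add_le_of_nonpos_right (integral_nonpos_of_ae h_nonpos)

theorem decreasing_zero_mean_partial_integrals_nonneg_general {α : Type*} [LinearOrder α]
    [MeasurableSpace α] {μ : Measure α} {g f : α → ℝ} {s t : Set α} (hs : MeasurableSet s)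
    (ht : MeasurableSet t) (ht_lower : IsLowerSet t) (hg : AntitoneOn g s)
    (hf : 0 ≤ᵐ[μ.restrict s] f) (hint : IntegrableOn (fun x => g x * f x) s μ)
    (htotal : 0 ≤ ∫ x in s, g x * f x ∂μ) :
    0 ≤ ∫ x in s ∩ t, g x * f x ∂μ := by
  rcases antitoneOn_forall_le_inter_or_forall_ge_sdiff hg ht_lower 0 with hg_nonneg | hg_nonpos
  · refine integral_nonneg_of_ae ?_
    filter_upwards [ae_restrict_of_ae_restrict_of_subset inter_subset_left hf,
      ae_restrict_mem (hs.inter ht)] with x hfx hx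
    exact mul_nonneg (hg_nonneg x hx) hfx
  · refine htotal.trans (setIntegral_le_setIntegral_inter_of_ae_nonpos_sdiff ht hint ?_)
    filter_upwards [ae_restrict_of_ae_restrict_of_subset sdiff_subset hf,
      ae_restrict_mem (hs.diff ht)] with x hfx hx
    exact mul_nonpos_of_nonpos_of_nonneg (hg_nonpos x hx) hfx

/-- If `g` is nonincreasing on `[a,b]`, `f` is nonnegative on
`[a,b]`, `g*f` is integrable, and `∫_a^b g f = 0`, then every partial integral
`∫_a^c g f` with `c ∈ [a,b]` is nonnegative. -/
theorem decreasing_zero_mean_partial_integrals_nonneg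
    (a b : ℝ) (hab : a < b)
    (g f : ℝ → ℝ)
    (hg : AntitoneOn g (Set.Icc a b))
    (hf : ∀ t ∈ Set.Icc a b, 0 ≤ f t)
    (hint : IntegrableOn (fun t => g t * f t) (Set.Icc a b))
    (hzero : ∫ t in a..b, g t * f t = 0) :
    ∀ c ∈ Set.Icc a b, 0 ≤ ∫ t in a..c, g t * f t := by
  intro c hc
  have hsub : Ioc a b ⊆ Icc a b := Ioc_subset_Icc_self
  have hf_ae : 0 ≤ᵐ[volume.restrict (Ioc a b)] f :=
    ae_restrict_of_forall_mem measurableSet_Ioc fun t ht => hf t (hsub ht)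
  have htotal : 0 ≤ ∫ t in Ioc a b, g t * f t := by
    rw [← intervalIntegral.integral_of_le hab.le, hzero]
  rw [intervalIntegral.integral_of_le hc.1, ← inf_eq_right.2 hc.2, ← Ioc_inter_Iic]
  exact decreasing_zero_mean_partial_integrals_nonneg_general measurableSet_Ioc measurableSet_Iic
    (isLowerSet_Iic c) (hg.mono hsub) hf_ae (hint.mono_set hsub) htotal
end

section
/- Let x₀ < x₁ < x₂ be real numbers, let h : ℝ → ℝ be continuous with h > 0 on [x₀,x₂], and let Γ : ℝ → ℝ be continuous on [x₀,x₂]. Define α = ∫_{x₀}^{x₁} h, β = ∫_{x₁}^{x₂} h, a₁ = α⁻¹ * ∫_{x₀}^{x₁} Γ(t)h(t)dt, a₂ = β⁻¹ * ∫_{x₁}^{x₂} Γ(t)h(t)dt, b₁ = α⁻¹ * ∫_{x₀}^{x₁} t*h(t)dt, b₂ = β⁻¹ * ∫_{x₁}^{x₂} t*h(t)dt, and m = (α*b₁ + β*b₂)/(α + β). Then m * (α*a₁ + β*a₂) ≥ α*a₁*b₁ + β*a₂*b₂ if and only if a₁ ≥ a₂. Equivalently, pooling the whole interval [x₀,x₂)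 yields an objective value ∫ Γ(t)*x̄_p(t)*h(t)dt at least as large as separating it into [x₀,x₁) and [x₁,x₂) (with x̄_s equal to the conditional mean of the identity on each piece) if and only if the h-weighted average of Γ on [x₀,x₁) is at least its h-weighted average on [x₁,x₂). -/
/-!
Let the two cells have masses `α`, `β`, and let `Γ` and the quality have cell means `a₁`, `a₂` and
`b₁`, `b₂`. Separating beats pooling by the covariance of the two cell means,
`αβ / (α + β) * (b₂ - b₁) * (a₂ - a₁)`. Qualities in the lower cell are at most `x₁` and those in
the upper cell exceed it, so `b₁ ≤ x₁ < b₂` and the sign is that of `a₂ - a₁`.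
-/

open MeasureTheory

section CellMeans

variable {K : Type*} [Field K] {α β : K}

lemma pooled_sub_separated (hαβ : α + β ≠ 0) (a₁ a₂ b₁ b₂ : K) :
    (α * b₁ + β * b₂) / (α + β) * (α * a₁ + β * a₂) - (α * a₁ * b₁ + β * a₂ * b₂) =
      α * β / (α + β) * (b₂ - b₁) * (a₁ - a₂) := by
  field_simp
  ring

lemma separated_le_pooled_iff [LinearOrder K] [IsStrictOrderedRing K] {b₁ b₂ : K}
    (hα : 0 < α) (hβ : 0 < β) (hb : b₁ < b₂) (a₁ a₂ : K) :
    α * a₁ * b₁ + β * a₂ * b₂ ≤ (α * b₁ + β * b₂) / (α + β) * (α * a₁ + β * a₂) ↔ a₂ ≤ a₁ := by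
  have hgap : 0 < α * β / (α + β) * (b₂ - b₁) := mul_pos (by positivity) (sub_pos.2 hb)
  rw [← sub_nonneg, pooled_sub_separated (add_pos hα hβ).ne', mul_nonneg_iff_of_pos_left hgap,
    sub_nonneg]

end CellMeans

section WeightedMean

variable {Ω : Type*} [MeasurableSpace Ω] {μ : Measure Ω} {w f : Ω → ℝ} {c : ℝ}

/-- The mean of `f` under `μ` reweighted by `w`; the conditional mean of `f` on a cell `s` for the
density `w` is the case of a restricted measure `μ.restrict s`. It is `0` if `∫ x, w x ∂μ = 0`. -/
noncomputable def weightedMean (μ : Measure Ω) (w f : Ω → ℝ) : ℝ :=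
  (∫ x, w x ∂μ)⁻¹ * ∫ x, f x * w x ∂μ

lemma weightedMean_le (hw : Integrable w μ) (hfw : Integrable (fun x ↦ f x * w x) μ)
    (hw_nonneg : 0 ≤ᵐ[μ] w) (hw_pos : 0 < ∫ x, w x ∂μ) (hf : ∀ᵐ x ∂μ, f x ≤ c) :
    weightedMean μ w f ≤ c := by
  rw [weightedMean, inv_mul_le_iff₀ hw_pos, mul_comm, ← integral_const_mul]
  refine integral_mono_ae hfw (hw.const_mul c) ?_
  filter_upwards [hw_nonneg, hf] with x hwx hfx using mul_le_mul_of_nonneg_right hfx hwx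

lemma lt_weightedMean (hw : Integrable w μ) (hfw : Integrable (fun x ↦ f x * w x) μ)
    (hw_nonneg : 0 ≤ᵐ[μ] w) (hw_pos : 0 < ∫ x, w x ∂μ) (hf : ∀ᵐ x ∂μ, c < f x) :
    c < weightedMean μ w f := by
  have hle : (fun x ↦ c * w x) ≤ᵐ[μ] fun x ↦ f x * w x := by
    filter_upwards [hw_nonneg, hf] with x hwx hfx using mul_le_mul_of_nonneg_right hfx.le hwx
  rw [weightedMean, lt_inv_mul_iff₀ hw_pos, mul_comm, ← integral_const_mul]
  refine (integral_mono_ae (hw.const_mul c) hfw hle).lt_of_ne fun heq ↦ hw_pos.ne' ?_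
  have hae := (integral_eq_iff_of_ae_le (hw.const_mul c) hfw hle).1 heq
  refine integral_eq_zero_of_ae ?_
  filter_upwards [hae, hf] with x hx hfx
  exact (mul_eq_mul_right_iff.1 hx).resolve_left hfx.ne

end WeightedMean

lemma weightedMean_id_Ioc_lt_weightedMean_id_Ioc {μ : Measure ℝ} {w : ℝ → ℝ} {x₀ x₁ x₂ : ℝ}
    (h01 : x₀ ≤ x₁) (h12 : x₁ ≤ x₂) (hw : IntervalIntegrable w μ x₀ x₂)
    (hw_nonneg : 0 ≤ᵐ[μ.restrict (Set.Ioc x₀ x₂)] w)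
    (hlow : 0 < ∫ t in Set.Ioc x₀ x₁, w t ∂μ) (hhigh : 0 < ∫ t in Set.Ioc x₁ x₂, w t ∂μ) :
    weightedMean (μ.restrict (Set.Ioc x₀ x₁)) w id <
      weightedMean (μ.restrict (Set.Ioc x₁ x₂)) w id := by
  have hlow_sub : Set.Ioc x₀ x₁ ⊆ Set.Ioc x₀ x₂ := Set.Ioc_subset_Ioc_right h12
  have hhigh_sub : Set.Ioc x₁ x₂ ⊆ Set.Ioc x₀ x₂ := Set.Ioc_subset_Ioc_left h01
  have hwi : IntegrableOn w (Set.Ioc x₀ x₂) μ := hw.1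
  have hidw : IntegrableOn (fun t ↦ id t * w t) (Set.Ioc x₀ x₂) μ :=
    (hw.continuousOn_mul continuousOn_id).1
  calc weightedMean (μ.restrict (Set.Ioc x₀ x₁)) w id
      ≤ x₁ := weightedMean_le (hwi.mono_set hlow_sub) (hidw.mono_set hlow_sub)
        (ae_restrict_of_ae_restrict_of_subset hlow_sub hw_nonneg) hlow
        (ae_restrict_of_forall_mem measurableSet_Ioc fun _ ht ↦ ht.2)
    _ < weightedMean (μ.restrict (Set.Ioc x₁ x₂)) w id :=
        lt_weightedMean (hwi.mono_set hhigh_sub) (hidw.mono_set hhigh_sub)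
          (ae_restrict_of_ae_restrict_of_subset hhigh_sub hw_nonneg) hhigh
          (ae_restrict_of_forall_mem measurableSet_Ioc fun _ ht ↦ ht.1)

theorem pooling_vs_separating_general
    (μ : Measure ℝ) (x₀ x₁ x₂ : ℝ) (h01 : x₀ ≤ x₁) (h12 : x₁ ≤ x₂)
    (h Γ : ℝ → ℝ)
    (hh : IntervalIntegrable h μ x₀ x₂)
    (hh_nonneg : 0 ≤ᵐ[μ.restrict (Set.Ioc x₀ x₂)] h)
    (_hΓ : IntervalIntegrable (fun t ↦ Γ t * h t) μ x₀ x₂)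
    (α β a₁ a₂ b₁ b₂ m : ℝ)
    (hα_pos : 0 < α) (hβ_pos : 0 < β)
    (hα : α = ∫ t in x₀..x₁, h t ∂μ)
    (hβ : β = ∫ t in x₁..x₂, h t ∂μ)
    (_ha₁ : a₁ = α⁻¹ * ∫ t in x₀..x₁, Γ t * h t ∂μ)
    (_ha₂ : a₂ = β⁻¹ * ∫ t in x₁..x₂, Γ t * h t ∂μ)
    (hb₁ : b₁ = α⁻¹ * ∫ t in x₀..x₁, t * h t ∂μ)
    (hb₂ : b₂ = β⁻¹ * ∫ t in x₁..x₂, t * h t ∂μ)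
    (hm : m = (α * b₁ + β * b₂) / (α + β)) :
    m * (α * a₁ + β * a₂) ≥ α * a₁ * b₁ + β * a₂ * b₂ ↔ a₁ ≥ a₂ := by
  rw [intervalIntegral.integral_of_le h01] at hα hb₁
  rw [intervalIntegral.integral_of_le h12] at hβ hb₂
  have hb : b₁ < b₂ := by
    rw [hb₁, hb₂, hα, hβ]
    exact weightedMean_id_Ioc_lt_weightedMean_id_Ioc h01 h12 hh hh_nonneg
      (hα ▸ hα_pos) (hβ ▸ hβ_pos)
  rw [hm]
  exact separated_le_pooled_iff hα_pos hβ_pos hb a₁ a₂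

/-- Pooling `[x₀,x₂)` beats separating into `[x₀,x₁)` and
`[x₁,x₂)` (i.e., `m*(α*a₁+β*a₂) ≥ α*a₁*b₁+β*a₂*b₂`) if and only if the
h-weighted average of the gain function `Γ` on the lower piece is at least
that on the upper piece (`a₁ ≥ a₂`). -/
theorem pooling_vs_separating
    (x₀ x₁ x₂ : ℝ) (h01 : x₀ < x₁) (h12 : x₁ < x₂)
    (h Γ : ℝ → ℝ)
    (hh : ContinuousOn h (Set.Icc x₀ x₂))
    (hhpos : ∀ t ∈ Set.Icc x₀ x₂, 0 < h t)
    (hΓ : ContinuousOn Γ (Set.Icc x₀ x₂))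
    (α β a₁ a₂ b₁ b₂ m : ℝ)
    (hα : α = ∫ t in x₀..x₁, h t)
    (hβ : β = ∫ t in x₁..x₂, h t)
    (ha₁ : a₁ = α⁻¹ * ∫ t in x₀..x₁, Γ t * h t)
    (ha₂ : a₂ = β⁻¹ * ∫ t in x₁..x₂, Γ t * h t)
    (hb₁ : b₁ = α⁻¹ * ∫ t in x₀..x₁, t * h t)
    (hb₂ : b₂ = β⁻¹ * ∫ t in x₁..x₂, t * h t)
    (hm : m = (α * b₁ + β * b₂) / (α + β)) :
    m * (α * a₁ + β * a₂) ≥ α * a₁ * b₁ + β * a₂ * b₂ ↔ a₁ ≥ a₂ := by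
  have h02 : x₀ ≤ x₂ := (h01.trans h12).le
  have hα_pos : 0 < α := hα ▸ intervalIntegral.intervalIntegral_pos_of_pos_on
    ((hh.mono (Set.Icc_subset_Icc_right h12.le)).intervalIntegrable_of_Icc h01.le)
    (fun t ht ↦ hhpos t ⟨ht.1.le, (ht.2.trans h12).le⟩) h01
  have hβ_pos : 0 < β := hβ ▸ intervalIntegral.intervalIntegral_pos_of_pos_on
    ((hh.mono (Set.Icc_subset_Icc_left h01.le)).intervalIntegrable_of_Icc h12.le)
    (fun t ht ↦ hhpos t ⟨(h01.trans ht.1).le, ht.2.le⟩) h12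
  exact pooling_vs_separating_general volume x₀ x₁ x₂ h01.le h12.le h Γ
    (hh.intervalIntegrable_of_Icc h02)
    (ae_restrict_of_forall_mem measurableSet_Ioc fun t ht ↦
      (hhpos t (Set.Ioc_subset_Icc_self ht)).le)
    ((hΓ.mul hh).intervalIntegrable_of_Icc h02)
    α β a₁ a₂ b₁ b₂ m hα_pos hβ_pos hα hβ ha₁ ha₂ hb₁ hb₂ hm
end

section
/- Let h : ℝ → ℝ be continuous with h > 0 on [0,1], and let Γ : ℝ → ℝ be continuously differentiable on [0,1]. Let x̄ : ℝ → ℝ be feasible, i.e., monotone nondecreasing on [0,1], with ∫_0^x (x̄(t) - t)*h(t) dt ≥ 0 for all x ∈ [0,1] and ∫_0^1 (x̄(t) - t)*h(t) dt = 0, and suppose x̄ maximizes ∫_0^1 Γ(t)*y(t)*h(t) dt among all feasible y. If x₁ < x₂ in [0,1] and x̄(t) = t for every t ∈ [x₁, x₂), then Γ is monotone nondecreasing on [x₁, x₂). -/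
/-- A signaled-quality function is feasible for density `h` if it is monotone
nondecreasing on `[0,1]` and satisfies the majorization constraints
`∫_0^x (y(t) - t) h(t) dt ≥ 0` for all `x ∈ [0,1]` with equality at `x = 1`. -/
def FeasibleSignal (h y : ℝ → ℝ) : Prop :=
  MonotoneOn y (Set.Icc (0 : ℝ) 1) ∧
  (∀ x ∈ Set.Icc (0 : ℝ) 1, 0 ≤ ∫ t in (0 : ℝ)..x, (y t - t) * h t) ∧
  (∫ t in (0 : ℝ)..(1 : ℝ), (y t - t) * h t) = 0

/-!
If `Γ` fell from `a` to `b` inside the revealing interval, one could raise the signaled quality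
slightly just to the right of `a` and lower it just to the left of `b`, keeping its `h`-weighted
mean. The majorization constraints survive because quality moves to the left, and the gain is
positive because quality moves to where `Γ` is larger. Using tent functions of slope at most `1`
for the two modifications keeps the signaled quality monotone, since it is the identity there.
-/

open Set MeasureTheory Filter
open scoped Topology

section Order

variable {α β : Type*} [LinearOrder α]

theorem monotoneOn_Icc_of_eqOn_diff_Ioo [Preorder β] {f g : α → β} {l a b u : α}
    (hla : l ≤ a) (hab : a ≤ b) (hbu : b ≤ u) (hf : MonotoneOn f (Icc l u))
    (hg : MonotoneOn g (Icc a b)) (hfg : EqOn f g (Icc l u \ Ioo a b)) :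
    MonotoneOn g (Icc l u) := by
  have left : MonotoneOn g (Icc l a) :=
    (hf.mono (Icc_subset_Icc_right (hab.trans hbu))).congr fun t ht =>
      hfg ⟨⟨ht.1, ht.2.trans (hab.trans hbu)⟩, fun h => h.1.not_ge ht.2⟩
  have right : MonotoneOn g (Icc b u) :=
    (hf.mono (Icc_subset_Icc_left (hla.trans hab))).congr fun t ht =>
      hfg ⟨⟨(hla.trans hab).trans ht.1, ht.2⟩, fun h => h.2.not_ge ht.1⟩
  have left_middle : MonotoneOn g (Icc l b) := by
    rw [← Icc_union_Icc_eq_Icc hla hab]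
    exact left.union_right hg (isGreatest_Icc hla) (isLeast_Icc hab)
  rw [← Icc_union_Icc_eq_Icc (hla.trans hab) hbu]
  exact left_middle.union_right right (isGreatest_Icc (hla.trans hab)) (isLeast_Icc hbu)

theorem exists_forall_Ioo_lt_and_forall_Ioo_gt [TopologicalSpace α] [OrderTopology α]
    [DenselyOrdered α] [LinearOrder β] [TopologicalSpace β] [OrderTopology β] [DenselyOrdered β]
    {f : α → β} {a b : α} (hab : a < b) (hf : ContinuousOn f (Icc a b)) (hfab : f b < f a) :
    ∃ k, ∃ p ∈ Ioo a b, ∃ q ∈ Ioo a b, p ≤ q ∧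
      (∀ t ∈ Ioo a p, k < f t) ∧ ∀ t ∈ Ioo q b, f t < k := by
  obtain ⟨k, hbk, hka⟩ := exists_between hfab
  obtain ⟨c, hac, hcb⟩ := exists_between hab
  have near_a : ∀ᶠ t in 𝓝[>] a, k < f t :=
    ((hf a (left_mem_Icc.2 hab.le)).mono_of_mem_nhdsWithin
      (Icc_mem_nhdsGT hab)).eventually (lt_mem_nhds hka)
  have near_b : ∀ᶠ t in 𝓝[<] b, f t < k :=
    ((hf b (right_mem_Icc.2 hab.le)).mono_of_mem_nhdsWithin
      (Icc_mem_nhdsLT hab)).eventually (gt_mem_nhds hbk)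
  obtain ⟨p, ⟨hap, hpc⟩, hp⟩ := (mem_nhdsGT_iff_exists_mem_Ioc_Ioo_subset hac).1 near_a
  obtain ⟨q, ⟨hcq, hqb⟩, hq⟩ := (mem_nhdsLT_iff_exists_mem_Ico_Ioo_subset hcb).1 near_b
  exact ⟨k, p, ⟨hap, hpc.trans_lt hcb⟩, q, ⟨hac.trans_le hcq, hqb⟩, hpc.trans hcq, hp, hq⟩

end Order

section Integral

variable {f g : ℝ → ℝ} {l u : ℝ}

theorem intervalIntegrable_of_Ioc_subset {a b : ℝ} (hab : a ≤ b) (hsub : Ioc a b ⊆ Ioc l u)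
    (hf : IntervalIntegrable f volume l u) : IntervalIntegrable f volume a b :=
  hf.mono_set' ((uIoc_of_le hab).trans_subset (hsub.trans Ioc_subset_uIoc))

theorem intervalIntegrable_mul_of_monotoneOn (hf : MonotoneOn f (uIcc l u))
    (hg : IntervalIntegrable g volume l u) :
    IntervalIntegrable (fun t => f t * g t) volume l u := by
  have hf_top : MemLp f ⊤ (volume.restrict (uIcc l u)) := hf.memLp_isCompact isCompact_uIcc
  rw [intervalIntegrable_iff] at hg ⊢
  exact hg.mul_of_top_right (hf_top.mono_measure (Measure.restrict_mono uIoc_subset_uIcc le_rfl))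

theorem integral_nonneg_of_nonneg_of_nonpos {m x : ℝ} (hf : IntervalIntegrable f volume l u)
    (hpos : ∀ t ∈ Icc l m, 0 ≤ f t) (hneg : ∀ t ∈ Icc m u, f t ≤ 0)
    (htotal : ∫ t in l..u, f t = 0) (hx : x ∈ Icc l u) : 0 ≤ ∫ t in l..x, f t := by
  rcases le_total x m with hxm | hmx
  · exact intervalIntegral.integral_nonneg hx.1 fun t ht => hpos t ⟨ht.1, ht.2.trans hxm⟩
  · have hx' : x ∈ uIcc l u := Icc_subset_uIcc hx
    have tail : 0 ≤ ∫ t in x..u, -f t :=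
      intervalIntegral.integral_nonneg hx.2 fun t ht =>
        neg_nonneg.2 (hneg t ⟨hmx.trans ht.1, ht.2⟩)
    have split := intervalIntegral.integral_add_adjacent_intervals
      (hf.mono_set (uIcc_subset_uIcc_left hx')) (hf.mono_set (uIcc_subset_uIcc_right hx'))
    rw [intervalIntegral.integral_neg] at tail
    linarith

end Integral

section Tent

variable {f g h : ℝ → ℝ} {l u p q r s t : ℝ}

/-- The tent function on `[p, q]`: the distance from `t` to the complement of `(p, q)`. -/
def tent (p q t : ℝ) : ℝ := max 0 (min (t - p) (q - t))

theorem tent_nonneg : 0 ≤ tent p q t := le_max_left _ _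

theorem tent_pos (ht : t ∈ Ioo p q) : 0 < tent p q t :=
  lt_max_of_lt_right (lt_min (sub_pos.2 ht.1) (sub_pos.2 ht.2))

theorem tent_eq_zero (ht : t ∉ Ioo p q) : tent p q t = 0 := by
  refine max_eq_left (not_lt.1 fun hpos => ht ?_)
  rw [lt_min_iff, sub_pos, sub_pos] at hpos
  exact hpos

theorem continuous_tent : Continuous (tent p q) := by
  unfold tent
  fun_prop

theorem monotone_add_tent : Monotone fun t => t + tent p q t := by
  intro x y hxy
  simp only [tent]
  grind

theorem monotone_sub_tent : Monotone fun t => t - tent p q t := by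
  intro x y hxy
  simp only [tent]
  grind

theorem tent_mul_nonneg (hf : ∀ t ∈ Ioo p q, 0 ≤ f t) : 0 ≤ tent p q t * f t := by
  by_cases ht : t ∈ Ioo p q
  · exact mul_nonneg tent_nonneg (hf t ht)
  · rw [tent_eq_zero ht, zero_mul]

theorem intervalIntegrable_tent_mul (hf : IntervalIntegrable f volume l u) :
    IntervalIntegrable (fun t => tent p q t * f t) volume l u :=
  hf.continuousOn_mul continuous_tent.continuousOn

/-- The moment of `f` against the tent function on `[p, q]`; for a density `h` it is the mass under
the tent, by which `tentTransfer` balances its two tents. -/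
noncomputable def tentMoment (f : ℝ → ℝ) (p q : ℝ) : ℝ := ∫ t, tent p q t * f t

theorem integral_tent_mul (hpq : Ioc p q ⊆ Ioc l u) :
    ∫ t in l..u, tent p q t * f t = tentMoment f p q := by
  refine intervalIntegral.integral_eq_integral_of_support_subset fun t ht =>
    hpq (Ioo_subset_Ioc_self ?_)
  by_contra hnot
  exact ht (mul_eq_zero_of_left (tent_eq_zero hnot) _)

theorem tentMoment_pos (hpq : p < q) (hf : IntervalIntegrable f volume p q)
    (hpos : ∀ t ∈ Ioo p q, 0 < f t) : 0 < tentMoment f p q := by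
  rw [← integral_tent_mul Subset.rfl]
  exact intervalIntegral.intervalIntegral_pos_of_pos_on (intervalIntegrable_tent_mul hf)
    (fun t ht => mul_pos (tent_pos ht) (hpos t ht)) hpq

theorem tentMoment_const_mul (k : ℝ) :
    tentMoment (fun t => k * f t) p q = k * tentMoment f p q := by
  simp only [tentMoment, mul_left_comm _ k, integral_const_mul]

theorem tentMoment_lt_tentMoment (hpq : p < q) (hf : IntervalIntegrable f volume p q)
    (hg : IntervalIntegrable g volume p q) (hfg : ∀ t ∈ Ioo p q, f t < g t) :
    tentMoment f p q < tentMoment g p q := by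
  have hpos := tentMoment_pos hpq (hg.sub hf) fun t ht => sub_pos.2 (hfg t ht)
  simp only [← integral_tent_mul Subset.rfl, mul_sub] at hpos ⊢
  rwa [intervalIntegral.integral_sub (intervalIntegrable_tent_mul hg)
    (intervalIntegrable_tent_mul hf), sub_pos] at hpos

/-- The perturbation of the signaled quality that raises it by a multiple of the tent on `[p, q]`
and lowers it by a multiple of the tent on `[r, s]`. The multiples are chosen so that the
`h`-weighted mean is unchanged, and normalized to have sum `1`, which makes
`t + tentTransfer h p q r s t` a convex combination of monotone functions. -/
noncomputable def tentTransfer (h : ℝ → ℝ) (p q r s t : ℝ) : ℝ :=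
  (tentMoment h r s * tent p q t - tentMoment h p q * tent r s t) /
    (tentMoment h p q + tentMoment h r s)

theorem tentTransfer_eq_zero (hpq : t ∉ Ioo p q) (hrs : t ∉ Ioo r s) :
    tentTransfer h p q r s t = 0 := by
  simp [tentTransfer, tent_eq_zero hpq, tent_eq_zero hrs]

theorem continuous_tentTransfer : Continuous (tentTransfer h p q r s) := by
  have := continuous_tent (p := p) (q := q)
  have := continuous_tent (p := r) (q := s)
  unfold tentTransfer
  fun_prop

theorem monotone_add_tentTransfer (hpq : 0 < tentMoment h p q) (hrs : 0 < tentMoment h r s) :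
    Monotone fun t => t + tentTransfer h p q r s t := by
  have convex_combination : (fun t => t + tentTransfer h p q r s t) = fun t =>
      (tentMoment h r s * (t + tent p q t) + tentMoment h p q * (t - tent r s t)) /
        (tentMoment h p q + tentMoment h r s) := by
    funext t
    unfold tentTransfer
    field_simp
    ring
  rw [convex_combination]
  intro x y hxy
  have hadd : x + tent p q x ≤ y + tent p q y := monotone_add_tent hxy
  have hsub : x - tent r s x ≤ y - tent r s y := monotone_sub_tent hxy
  dsimp only
  gcongr

theorem tentTransfer_mul_nonneg (hpq : 0 ≤ tentMoment h p q) (hrs : 0 ≤ tentMoment h r s)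
    (hh : ∀ t ∈ Ioo p q, 0 ≤ h t) (htr : t ≤ r) : 0 ≤ tentTransfer h p q r s t * h t := by
  rw [tentTransfer, tent_eq_zero (p := r) fun ht => htr.not_gt ht.1, mul_zero, sub_zero,
    div_mul_eq_mul_div, mul_assoc]
  exact div_nonneg (mul_nonneg hrs (tent_mul_nonneg hh)) (add_nonneg hpq hrs)

theorem tentTransfer_mul_nonpos (hpq : 0 ≤ tentMoment h p q) (hrs : 0 ≤ tentMoment h r s)
    (hh : ∀ t ∈ Ioo r s, 0 ≤ h t) (hqt : q ≤ t) : tentTransfer h p q r s t * h t ≤ 0 := by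
  rw [tentTransfer, tent_eq_zero (p := p) fun ht => hqt.not_gt ht.2, mul_zero, zero_sub,
    div_mul_eq_mul_div, neg_mul, mul_assoc]
  exact div_nonpos_of_nonpos_of_nonneg
    (neg_nonpos.2 (mul_nonneg hpq (tent_mul_nonneg hh))) (add_nonneg hpq hrs)

theorem intervalIntegrable_tentTransfer_mul (hf : IntervalIntegrable f volume l u) :
    IntervalIntegrable (fun t => tentTransfer h p q r s t * f t) volume l u :=
  hf.continuousOn_mul continuous_tentTransfer.continuousOn

theorem integral_tentTransfer_mul (hf : IntervalIntegrable f volume l u)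
    (hpq : Ioc p q ⊆ Ioc l u) (hrs : Ioc r s ⊆ Ioc l u) :
    ∫ t in l..u, tentTransfer h p q r s t * f t =
      (tentMoment h r s * tentMoment f p q - tentMoment h p q * tentMoment f r s) /
        (tentMoment h p q + tentMoment h r s) := by
  simp only [tentTransfer, div_mul_eq_mul_div, sub_mul, mul_assoc, intervalIntegral.integral_div]
  rw [intervalIntegral.integral_sub ((intervalIntegrable_tent_mul hf).const_mul _)
    ((intervalIntegrable_tent_mul hf).const_mul _)]
  simp only [intervalIntegral.integral_const_mul, integral_tent_mul hpq, integral_tent_mul hrs]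

theorem integral_tentTransfer_mul_self (hh : IntervalIntegrable h volume l u)
    (hpq : Ioc p q ⊆ Ioc l u) (hrs : Ioc r s ⊆ Ioc l u) :
    ∫ t in l..u, tentTransfer h p q r s t * h t = 0 := by
  rw [integral_tentTransfer_mul hh hpq hrs, mul_comm, sub_self, zero_div]

theorem integral_tentTransfer_mul_pos {k : ℝ} (hpq : p < q) (hrs : r < s)
    (hpq_sub : Ioc p q ⊆ Ioc l u) (hrs_sub : Ioc r s ⊆ Ioc l u)
    (hh : IntervalIntegrable h volume l u)
    (hgh : IntervalIntegrable (fun t => g t * h t) volume l u)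
    (hh_pq : ∀ t ∈ Ioo p q, 0 < h t) (hh_rs : ∀ t ∈ Ioo r s, 0 < h t)
    (hg_pq : ∀ t ∈ Ioo p q, k < g t) (hg_rs : ∀ t ∈ Ioo r s, g t < k) :
    0 < ∫ t in l..u, tentTransfer h p q r s t * (g t * h t) := by
  have hh_int_pq := intervalIntegrable_of_Ioc_subset hpq.le hpq_sub hh
  have hh_int_rs := intervalIntegrable_of_Ioc_subset hrs.le hrs_sub hh
  have hgh_int_pq := intervalIntegrable_of_Ioc_subset hpq.le hpq_sub hgh
  have hgh_int_rs := intervalIntegrable_of_Ioc_subset hrs.le hrs_sub hgh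
  have pos_pq : 0 < tentMoment h p q := tentMoment_pos hpq hh_int_pq hh_pq
  have pos_rs : 0 < tentMoment h r s := tentMoment_pos hrs hh_int_rs hh_rs
  have above_pq : k * tentMoment h p q < tentMoment (fun t => g t * h t) p q := by
    rw [← tentMoment_const_mul]
    exact tentMoment_lt_tentMoment hpq (hh_int_pq.const_mul k) hgh_int_pq
      fun t ht => mul_lt_mul_of_pos_right (hg_pq t ht) (hh_pq t ht)
  have below_rs : tentMoment (fun t => g t * h t) r s < k * tentMoment h r s := by
    rw [← tentMoment_const_mul]
    exact tentMoment_lt_tentMoment hrs hgh_int_rs (hh_int_rs.const_mul k)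
      fun t ht => mul_lt_mul_of_pos_right (hg_rs t ht) (hh_rs t ht)
  rw [integral_tentTransfer_mul hgh hpq_sub hrs_sub]
  refine div_pos (sub_pos.2 ?_) (add_pos pos_pq pos_rs)
  calc tentMoment h p q * tentMoment (fun t => g t * h t) r s
      < tentMoment h p q * (k * tentMoment h r s) := by gcongr
    _ = tentMoment h r s * (k * tentMoment h p q) := by ring
    _ < tentMoment h r s * tentMoment (fun t => g t * h t) p q := by gcongr

end Tent

namespace FeasibleSignal

variable {h y : ℝ → ℝ} {p q r s : ℝ}

theorem intervalIntegrable_mul {f : ℝ → ℝ} (hy : FeasibleSignal h y)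
    (hf : IntervalIntegrable f volume 0 1) :
    IntervalIntegrable (fun t => y t * f t) volume 0 1 :=
  intervalIntegrable_mul_of_monotoneOn (by rw [uIcc_of_le zero_le_one]; exact hy.1) hf

theorem add {d : ℝ → ℝ} (hy : FeasibleSignal h y) (hh : IntervalIntegrable h volume 0 1)
    (hd : IntervalIntegrable (fun t => d t * h t) volume 0 1)
    (hmono : MonotoneOn (fun t => y t + d t) (Icc 0 1))
    (hnonneg : ∀ x ∈ Icc (0 : ℝ) 1, 0 ≤ ∫ t in (0 : ℝ)..x, d t * h t)
    (htotal : ∫ t in (0 : ℝ)..1, d t * h t = 0) : FeasibleSignal h fun t => y t + d t := by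
  have hgap : IntervalIntegrable (fun t => (y t - t) * h t) volume 0 1 := by
    simpa only [sub_mul, id] using
      (hy.intervalIntegrable_mul hh).sub (hh.continuousOn_mul continuousOn_id)
  have split : ∀ x ∈ Icc (0 : ℝ) 1, ∫ t in (0 : ℝ)..x, (y t + d t - t) * h t =
      (∫ t in (0 : ℝ)..x, (y t - t) * h t) + ∫ t in (0 : ℝ)..x, d t * h t := by
    intro x hx
    have hsub : uIcc 0 x ⊆ uIcc 0 1 := uIcc_subset_uIcc_left (Icc_subset_uIcc hx)
    rw [← intervalIntegral.integral_add (hgap.mono_set hsub) (hd.mono_set hsub)]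
    simp only [add_sub_right_comm, add_mul]
  refine ⟨hmono, fun x hx => ?_, ?_⟩
  · rw [split x hx]
    exact add_nonneg (hy.2.1 x hx) (hnonneg x hx)
  · rw [split 1 (right_mem_Icc.2 zero_le_one), hy.2.2, htotal, add_zero]

theorem add_tentTransfer (hy : FeasibleSignal h y) (hh : IntervalIntegrable h volume 0 1)
    (hp : 0 ≤ p) (hpq : p < q) (hqr : q ≤ r) (hrs : r < s) (hs : s ≤ 1)
    (hh_pq : ∀ t ∈ Ioo p q, 0 < h t) (hh_rs : ∀ t ∈ Ioo r s, 0 < h t)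
    (hreveal : EqOn y id (Icc p s)) :
    FeasibleSignal h fun t => y t + tentTransfer h p q r s t := by
  have hpq_sub : Ioc p q ⊆ Ioc 0 1 := Ioc_subset_Ioc hp (by order)
  have hrs_sub : Ioc r s ⊆ Ioc 0 1 := Ioc_subset_Ioc (by order) hs
  have pos_pq : 0 < tentMoment h p q :=
    tentMoment_pos hpq (intervalIntegrable_of_Ioc_subset hpq.le hpq_sub hh) hh_pq
  have pos_rs : 0 < tentMoment h r s :=
    tentMoment_pos hrs (intervalIntegrable_of_Ioc_subset hrs.le hrs_sub hh) hh_rs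
  have hd : IntervalIntegrable (fun t => tentTransfer h p q r s t * h t) volume 0 1 :=
    intervalIntegrable_tentTransfer_mul hh
  have total : ∫ t in (0 : ℝ)..1, tentTransfer h p q r s t * h t = 0 :=
    integral_tentTransfer_mul_self hh hpq_sub hrs_sub
  refine hy.add hh hd ?_ (fun x hx => ?_) total
  · refine monotoneOn_Icc_of_eqOn_diff_Ioo hp (by order) hs hy.1 ?_ fun t ht => ?_
    · exact ((monotone_add_tentTransfer pos_pq pos_rs).monotoneOn _).congr fun t ht => by
        simp only [hreveal ht, id]
    · rw [tentTransfer_eq_zero (fun htpq => ht.2 (Ioo_subset_Ioo_right (by order) htpq))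
        (fun htrs => ht.2 (Ioo_subset_Ioo_left (by order) htrs)), add_zero]
  · exact integral_nonneg_of_nonneg_of_nonpos (m := q) hd
      (fun t ht => tentTransfer_mul_nonneg pos_pq.le pos_rs.le (fun t ht => (hh_pq t ht).le)
        (ht.2.trans hqr))
      (fun t ht => tentTransfer_mul_nonpos pos_pq.le pos_rs.le (fun t ht => (hh_rs t ht).le) ht.1)
      total hx

theorem integral_mul_add_mul {Γ d : ℝ → ℝ} (hy : FeasibleSignal h y)
    (hΓh : IntervalIntegrable (fun t => Γ t * h t) volume 0 1)
    (hdΓh : IntervalIntegrable (fun t => d t * (Γ t * h t)) volume 0 1) :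
    ∫ t in (0 : ℝ)..1, Γ t * (y t + d t) * h t =
      (∫ t in (0 : ℝ)..1, Γ t * y t * h t) + ∫ t in (0 : ℝ)..1, d t * (Γ t * h t) := by
  have regroup (t c : ℝ) : Γ t * c * h t = c * (Γ t * h t) := by ring
  simp only [regroup, add_mul]
  exact intervalIntegral.integral_add (hy.intervalIntegrable_mul hΓh) hdΓh

end FeasibleSignal

theorem revealing_interval_gain_increasing_general {h Γ y : ℝ → ℝ} {x₁ x₂ : ℝ}
    (hh : IntervalIntegrable h volume 0 1)
    (hΓh : IntervalIntegrable (fun t => Γ t * h t) volume 0 1)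
    (hhpos : ∀ t ∈ Ioo x₁ x₂, 0 < h t) (hΓ : ContinuousOn Γ (Ico x₁ x₂))
    (hy : FeasibleSignal h y)
    (hopt : ∀ z : ℝ → ℝ, FeasibleSignal h z →
      ∫ t in (0 : ℝ)..1, Γ t * z t * h t ≤ ∫ t in (0 : ℝ)..1, Γ t * y t * h t)
    (hx₁ : 0 ≤ x₁) (hx₂ : x₂ ≤ 1) (hreveal : EqOn y id (Ico x₁ x₂)) :
    MonotoneOn Γ (Ico x₁ x₂) := by
  intro a ha b hb hab
  by_contra! hlt
  have hab : a < b := hab.lt_of_ne (by rintro rfl; exact hlt.false)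
  have hsub : Icc a b ⊆ Ico x₁ x₂ := fun t ht => ⟨ha.1.trans ht.1, ht.2.trans_lt hb.2⟩
  have ha₀ : 0 ≤ a := hx₁.trans ha.1
  have hb₁ : b ≤ 1 := hb.2.le.trans hx₂
  obtain ⟨k, p, hp, q, hq, hpq, hΓ_gt, hΓ_lt⟩ :=
    exists_forall_Ioo_lt_and_forall_Ioo_gt hab (hΓ.mono hsub) hlt
  have hh_ap : ∀ t ∈ Ioo a p, 0 < h t := fun t ht =>
    hhpos t ⟨ha.1.trans_lt ht.1, ht.2.trans (hp.2.trans hb.2)⟩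
  have hh_qb : ∀ t ∈ Ioo q b, 0 < h t := fun t ht =>
    hhpos t ⟨(ha.1.trans_lt hq.1).trans ht.1, ht.2.trans hb.2⟩
  have feasible : FeasibleSignal h fun t => y t + tentTransfer h a p q b t :=
    hy.add_tentTransfer hh ha₀ hp.1 hpq hq.2 hb₁ hh_ap hh_qb (hreveal.mono hsub)
  have gain : 0 < ∫ t in (0 : ℝ)..1, tentTransfer h a p q b t * (Γ t * h t) :=
    integral_tentTransfer_mul_pos hp.1 hq.2 (Ioc_subset_Ioc ha₀ (hp.2.le.trans hb₁))
      (Ioc_subset_Ioc (ha₀.trans hq.1.le) hb₁) hh hΓh hh_ap hh_qb hΓ_gt hΓ_lt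
  have no_gain := hopt _ feasible
  rw [hy.integral_mul_add_mul hΓh (intervalIntegrable_tentTransfer_mul hΓh)] at no_gain
  linarith

/-- If an optimal feasible signaled-quality function fully
reveals on `[x₁, x₂)` (i.e., `x̄(t) = t` there), then the gain function `Γ`
is nondecreasing on `[x₁, x₂)`. -/
theorem revealing_interval_gain_increasing
    (h Γ : ℝ → ℝ)
    (hh : ContinuousOn h (Set.Icc (0 : ℝ) 1))
    (hhpos : ∀ t ∈ Set.Icc (0 : ℝ) 1, 0 < h t)
    (hΓ : ContDiffOn ℝ 1 Γ (Set.Icc (0 : ℝ) 1))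
    (xbar : ℝ → ℝ)
    (hfeas : FeasibleSignal h xbar)
    (hopt : ∀ y : ℝ → ℝ, FeasibleSignal h y →
      (∫ t in (0 : ℝ)..(1 : ℝ), Γ t * y t * h t) ≤
      (∫ t in (0 : ℝ)..(1 : ℝ), Γ t * xbar t * h t))
    (x₁ x₂ : ℝ) (hx₁ : x₁ ∈ Set.Icc (0 : ℝ) 1) (hx₂ : x₂ ∈ Set.Icc (0 : ℝ) 1)
    (h12 : x₁ < x₂)
    (hreveal : ∀ t ∈ Set.Ico x₁ x₂, xbar t = t) :
    MonotoneOn Γ (Set.Ico x₁ x₂) := by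
  have hsub : Ico x₁ x₂ ⊆ Icc 0 1 := Ico_subset_Icc_self.trans (Icc_subset_Icc hx₁.1 hx₂.2)
  exact revealing_interval_gain_increasing_general
    (hh.intervalIntegrable_of_Icc zero_le_one)
    ((hΓ.continuousOn.mul hh).intervalIntegrable_of_Icc zero_le_one)
    (fun t ht => hhpos t (hsub (Ioo_subset_Ico_self ht))) (hΓ.continuousOn.mono hsub)
    hfeas hopt hx₁.1 hx₂.2 hreveal
end

section
/- Let f₁, f₂ > 0 and γ ≥ 0 be real numbers, and let φ : ℝ → ℝ be twice differentiable on (0, ∞) with φ''(z) ≤ 0 for all z > 0. Define Γ̂(z) = (1 + γ*φ(z))/(f₁ + f₂*z) for z > 0. Then the function z ↦ (f₁ + f₂*z)² * Γ̂'(z) is monotone nonincreasing on (0, ∞); in particular its derivative equals (f₁ + f₂*z)*γ*φ''(z) ≤ 0, so Γ̂' changes sign at most once on (0, ∞). -/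
/-!
For a quotient `q = u / v`, the function `v ^ 2 * q'` is the Wronskian `u' * v - u * v'`, whose
derivative `u'' * v - u * v''` contains no first-order terms. When `v` is affine only `u'' * v`
remains, so its sign is that of `u''` wherever `v` is positive.
-/

open Set Filter Topology

section Wronskian

variable {𝕜 : Type*} [NontriviallyNormedField 𝕜]

theorem hasDerivAt_wronskian {𝔸 : Type*} [NormedRing 𝔸] [NormedAlgebra 𝕜 𝔸]
    {u u' v v' : 𝕜 → 𝔸} {u'' v'' : 𝔸} {x : 𝕜}
    (hu : HasDerivAt u (u' x) x) (hu' : HasDerivAt u' u'' x)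
    (hv : HasDerivAt v (v' x) x) (hv' : HasDerivAt v' v'' x) :
    HasDerivAt (fun y => u' y * v y - u y * v' y) (u'' * v x - u x * v'') x :=
  ((hu'.fun_mul hv).fun_sub (hu.fun_mul hv')).congr_deriv (by abel)

variable {𝕂 : Type*} [NontriviallyNormedField 𝕂] [NormedAlgebra 𝕜 𝕂]

theorem sq_mul_deriv_div_eq_wronskian {u v q : 𝕜 → 𝕂} {u' v' q' : 𝕂} {x : 𝕜}
    (hu : HasDerivAt u u' x) (hv : HasDerivAt v v' x) (hvx : v x ≠ 0)
    (hquot : q =ᶠ[𝓝 x] fun y => u y / v y) (hq : HasDerivAt q q' x) :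
    v x ^ 2 * q' = u' * v x - u x * v' := by
  have quotient_rule : q' = (u' * v x - u x * v') / v x ^ 2 :=
    hq.unique ((hu.fun_div hv hvx).congr_of_eventuallyEq hquot)
  rw [quotient_rule, mul_div_cancel₀ _ (pow_ne_zero 2 hvx)]

theorem hasDerivAt_sq_mul_deriv_div {s : Set 𝕜} (hs : IsOpen s)
    {u u' v v' q q' : 𝕜 → 𝕂} {u'' v'' : 𝕂} {x : 𝕜} (hx : x ∈ s)
    (hu : ∀ y ∈ s, HasDerivAt u (u' y) y) (hu' : HasDerivAt u' u'' x)
    (hv : ∀ y ∈ s, HasDerivAt v (v' y) y) (hv' : HasDerivAt v' v'' x)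
    (hv₀ : ∀ y ∈ s, v y ≠ 0) (hquot : ∀ y ∈ s, q y = u y / v y)
    (hq : ∀ y ∈ s, HasDerivAt q (q' y) y) :
    HasDerivAt (fun y => v y ^ 2 * q' y) (u'' * v x - u x * v'') x := by
  have eq_wronskian : ∀ y ∈ s, v y ^ 2 * q' y = u' y * v y - u y * v' y := fun y hy =>
    sq_mul_deriv_div_eq_wronskian (hu y hy) (hv y hy) (hv₀ y hy)
      (eventuallyEq_of_mem (hs.mem_nhds hy) hquot) (hq y hy)
  exact (hasDerivAt_wronskian (hu x hx) hu' (hv x hx) hv').congr_of_eventuallyEq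
    (eventuallyEq_of_mem (hs.mem_nhds hx) eq_wronskian)

theorem hasDerivAt_sq_mul_deriv_div_affine {s : Set 𝕜} (hs : IsOpen s) {a b : 𝕜}
    {u u' q q' : 𝕜 → 𝕜} {u'' x : 𝕜} (hx : x ∈ s)
    (hu : ∀ y ∈ s, HasDerivAt u (u' y) y) (hu' : HasDerivAt u' u'' x)
    (hab : ∀ y ∈ s, a + b * y ≠ 0) (hquot : ∀ y ∈ s, q y = u y / (a + b * y))
    (hq : ∀ y ∈ s, HasDerivAt q (q' y) y) :
    HasDerivAt (fun y => (a + b * y) ^ 2 * q' y) ((a + b * x) * u'') x := by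
  have affine_deriv (y : 𝕜) : HasDerivAt (fun y => a + b * y) b y := by
    simpa only [mul_one] using ((hasDerivAt_id' y).const_mul b).const_add a
  refine (hasDerivAt_sq_mul_deriv_div hs hx hu hu' (fun y _ => affine_deriv y)
    (hasDerivAt_const x b) hab hquot hq).congr_deriv ?_
  ring

end Wronskian

theorem antitoneOn_of_hasDerivAt_nonpos {s : Set ℝ} (hs : Convex ℝ s) {f f' : ℝ → ℝ}
    (hf : ∀ x ∈ s, HasDerivAt f (f' x) x) (hf' : ∀ x ∈ s, f' x ≤ 0) : AntitoneOn f s :=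
  antitoneOn_of_hasDerivWithinAt_nonpos hs (HasDerivAt.continuousOn hf)
    (fun x hx => (hf x (interior_subset hx)).hasDerivWithinAt)
    (fun x hx => hf' x (interior_subset hx))

theorem nonpos_of_antitoneOn_mul {α R : Type*} [Preorder α]
    [MulZeroClass R] [LinearOrder R] [PosMulStrictMono R] {s : Set α} {w g : α → R}
    (hanti : AntitoneOn (fun x => w x * g x) s) {x y : α} (hx : x ∈ s) (hy : y ∈ s)
    (hxy : x ≤ y) (hwx : 0 ≤ w x) (hwy : 0 < w y) (hgx : g x ≤ 0) : g y ≤ 0 := by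
  have hprod : w y * g y ≤ 0 :=
    (hanti hx hy hxy).trans (mul_nonpos_of_nonneg_of_nonpos hwx hgx)
  exact not_lt.1 fun hgy => hprod.not_gt (mul_pos hwy hgy)

/-- For the two-type gain function `Γ̂(z) = (1+γφ(z))/(f₁+f₂z)`
with `φ` concave (`φ'' ≤ 0`) on `(0,∞)` and `γ ≥ 0`, the function
`z ↦ (f₁+f₂z)² Γ̂'(z)` is nonincreasing on `(0,∞)`: its derivative equals
`(f₁+f₂z)γφ''(z) ≤ 0`, so `Γ̂'` changes sign at most once (once nonpositive,
it stays nonpositive). -/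
theorem gain_function_single_crossing
    (f₁ f₂ γ : ℝ) (hf₁ : 0 < f₁) (hf₂ : 0 < f₂) (hγ : 0 ≤ γ)
    (φ φ' φ'' : ℝ → ℝ)
    (hφ' : ∀ z > (0 : ℝ), HasDerivAt φ (φ' z) z)
    (hφ'' : ∀ z > (0 : ℝ), HasDerivAt φ' (φ'' z) z)
    (hconc : ∀ z > (0 : ℝ), φ'' z ≤ 0)
    (Γhat Γhat' : ℝ → ℝ)
    (hΓhat : ∀ z > (0 : ℝ), Γhat z = (1 + γ * φ z) / (f₁ + f₂ * z))
    (hΓhat' : ∀ z > (0 : ℝ), HasDerivAt Γhat (Γhat' z) z) :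
    AntitoneOn (fun z => (f₁ + f₂ * z) ^ 2 * Γhat' z) (Set.Ioi (0 : ℝ)) ∧
    (∀ z ∈ Set.Ioi (0 : ℝ),
      HasDerivAt (fun z => (f₁ + f₂ * z) ^ 2 * Γhat' z)
        ((f₁ + f₂ * z) * γ * φ'' z) z ∧ (f₁ + f₂ * z) * γ * φ'' z ≤ 0) ∧
    (∀ z₁ z₂ : ℝ, 0 < z₁ → z₁ ≤ z₂ → Γhat' z₁ ≤ 0 → Γhat' z₂ ≤ 0) := by
  have hpos : ∀ z ∈ Ioi (0 : ℝ), 0 < f₁ + f₂ * z := fun z hz =>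
    add_pos hf₁ (mul_pos hf₂ hz)
  have hderiv : ∀ z ∈ Ioi (0 : ℝ), HasDerivAt (fun z => (f₁ + f₂ * z) ^ 2 * Γhat' z)
      ((f₁ + f₂ * z) * γ * φ'' z) z := fun z hz => by
    rw [mul_assoc]
    exact hasDerivAt_sq_mul_deriv_div_affine isOpen_Ioi hz
      (fun y hy => ((hφ' y hy).const_mul γ).const_add 1) ((hφ'' z hz).const_mul γ)
      (fun y hy => (hpos y hy).ne') hΓhat hΓhat'
  have hnonpos : ∀ z ∈ Ioi (0 : ℝ), (f₁ + f₂ * z) * γ * φ'' z ≤ 0 := fun z hz =>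
    mul_nonpos_of_nonneg_of_nonpos (mul_nonneg (hpos z hz).le hγ) (hconc z hz)
  have hanti : AntitoneOn (fun z => (f₁ + f₂ * z) ^ 2 * Γhat' z) (Ioi 0) :=
    antitoneOn_of_hasDerivAt_nonpos (convex_Ioi 0) hderiv hnonpos
  refine ⟨hanti, fun z hz => ⟨hderiv z hz, hnonpos z hz⟩, fun z₁ z₂ hz₁ hz₁₂ => ?_⟩
  have hz₂ : 0 < z₂ := hz₁.trans_le hz₁₂
  exact nonpos_of_antitoneOn_mul hanti hz₁ hz₂ hz₁₂ (sq_nonneg _) (pow_pos (hpos z₂ hz₂) 2)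
end
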